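/- arXiv:2212.12591 — 8 statements merged into one kernel-verified Lean document; each statement's English description precedes it below -/
import Mathlib

section
/- Let φ be a Lie algebra automorphism of I(X,K) which is a regular Hom-Lie structure on I(X,K). Then for all x < y < z in X one has [φ(e_{xy}), e_{yz}] = [e_{xz}, φ(e_z)] and [e_{xy}, φ(e_{yz})] = [φ(e_x), e_{xz}]. -/
open IncidenceAlgebra

attribute [local instance 100] LieRing.ofAssociativeRing

/-- The Hom-Jacobi identity for a map `φ` on a Lie ring. -/
def HomJacobi {A : Type*} [LieRing A] (φ : A → A) : Prop :=
  ∀ a b c : A, ⁅⁅a, b⁆, φ c⁆ + ⁅⁅b, c⁆, φ a⁆ + ⁅⁅c, a⁆, φ b⁆ = 0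

/-- `φ` is a regular Hom-Lie structure: a Lie algebra automorphism satisfying Hom-Jacobi. -/
def IsRegHomLie (K : Type*) {A : Type*} [CommRing K] [LieRing A] [LieAlgebra K A]
    (φ : A → A) : Prop :=
  (∃ e : A ≃ₗ⁅K⁆ A, ⇑e = φ) ∧ HomJacobi φ

/-- The "matrix unit" `e_{xy}` of the incidence algebra, for `x ≤ y`. -/
def eSingle (K : Type*) [Field K] {X : Type*} [PartialOrder X] [DecidableEq X]
    (x y : X) (_h : x ≤ y) : IncidenceAlgebra K X where
  toFun u v := if u = x ∧ v = y then 1 else 0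
  eq_zero_of_not_le' u v huv := by
    split_ifs with h'
    · exact absurd (by rw [h'.1, h'.2]; exact _h) huv
    · rfl

/-- The multiplicative map `M_σ` on the incidence algebra: `(M_σ f)(x,y) = σ(x,y) f(x,y)`. -/
def Mmul (K : Type*) [Field K] {X : Type*} [PartialOrder X]
    (σ : X → X → K) (f : IncidenceAlgebra K X) : IncidenceAlgebra K X where
  toFun u v := σ u v * f u v
  eq_zero_of_not_le' u v huv := by
    rw [apply_eq_zero_of_not_le huv f, mul_zero]

/-- The conjugation map `ξ_β : f ↦ β f β⁻¹`. -/
noncomputable def xiMap {K : Type*} [Field K] {X : Type*} [PartialOrder X] [DecidableEq X]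
    [LocallyFiniteOrder X] (β : IncidenceAlgebra K X) :
    IncidenceAlgebra K X → IncidenceAlgebra K X :=
  fun f => β * f * Ring.inverse β

/-- `l(x,y)`: the maximal length of a chain from `x` to `y`. -/
noncomputable def chainLen {X : Type*} [PartialOrder X] (x y : X) : ℕ :=
  sSup {n : ℕ | ∃ c : Fin (n + 1) → X, StrictMono c ∧ c 0 = x ∧ c (Fin.last n) = y}

/-- `J^m`: the `K`-span of the `e_{xy}` with `x < y` and `l(x,y) ≥ m`. -/
noncomputable def Jpow (K : Type*) [Field K] {X : Type*} [PartialOrder X] [DecidableEq X]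
    (m : ℕ) : Submodule K (IncidenceAlgebra K X) :=
  Submodule.span K {f | ∃ x y, ∃ h : x < y, m ≤ chainLen x y ∧ f = eSingle K x y h.le}


theorem eSingle_mul_same {K : Type*} [Field K] {X : Type*} [PartialOrder X] [DecidableEq X]
    [LocallyFiniteOrder X] {x y z : X} (h : x ≤ y) (h' : y ≤ z) :
    eSingle K x y h * eSingle K y z h' = eSingle K x z (h.trans h') := by
  ext u v
  rw [IncidenceAlgebra.mul_apply]
  change (∑ w ∈ Finset.Icc u v, (if u = x ∧ w = y then (1 : K) else 0) *
    (if w = y ∧ v = z then 1 else 0)) = if u = x ∧ v = z then 1 else 0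
  by_cases hu : u = x ∧ v = z
  · obtain ⟨rfl, rfl⟩ := hu
    rw [Finset.sum_eq_single y]
    · simp
    · intro w _ hw
      simp [hw]
    · intro hw
      exact absurd (Finset.mem_Icc.2 ⟨h, h'⟩) hw
  · rw [if_neg hu]
    apply Finset.sum_eq_zero
    intro w _
    by_cases h1 : u = x
    · have h2 : v ≠ z := fun h2 => hu ⟨h1, h2⟩
      simp [h2]
    · simp [h1]

theorem eSingle_mul_ne {K : Type*} [Field K] {X : Type*} [PartialOrder X] [DecidableEq X]
    [LocallyFiniteOrder X] {x y y' z : X} (h : x ≤ y) (h' : y' ≤ z) (hne : y ≠ y') :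
    eSingle K x y h * eSingle K y' z h' = 0 := by
  ext u v
  rw [IncidenceAlgebra.mul_apply]
  change (∑ w ∈ Finset.Icc u v, (if u = x ∧ w = y then (1 : K) else 0) *
    (if w = y' ∧ v = z then 1 else 0)) = 0
  apply Finset.sum_eq_zero
  intro w _
  by_cases h1 : w = y
  · subst h1
    simp [hne]
  · simp [h1]

theorem stmt1 {K : Type*} [Field K] {X : Type*} [PartialOrder X] [Fintype X] [DecidableEq X]
    [LocallyFiniteOrder X]
    (hcard : 1 < Fintype.card X)
    (hconn : ∀ x y : X, Relation.ReflTransGen (fun a b : X => a ≤ b ∨ b ≤ a) x y)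
    (φ : IncidenceAlgebra K X ≃ₗ⁅K⁆ IncidenceAlgebra K X) (hφ : HomJacobi ⇑φ)
    {x y z : X} (hxy : x < y) (hyz : y < z) :
    ⁅φ (eSingle K x y hxy.le), eSingle K y z hyz.le⁆ =
      ⁅eSingle K x z (hxy.le.trans hyz.le), φ (eSingle K z z le_rfl)⁆ ∧
    ⁅eSingle K x y hxy.le, φ (eSingle K y z hyz.le)⁆ =
      ⁅φ (eSingle K x x le_rfl), eSingle K x z (hxy.le.trans hyz.le)⁆ := by
  have hxz := hxy.trans hyz
  have e1 := hφ (eSingle K x y hxy.le) (eSingle K y z hyz.le) (eSingle K z z le_rfl)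
  have e2 := hφ (eSingle K x y hxy.le) (eSingle K y z hyz.le) (eSingle K x x le_rfl)
  have b1 : ⁅eSingle K x y hxy.le, eSingle K y z hyz.le⁆ = eSingle K x z hxz.le := by
    rw [Ring.lie_def, eSingle_mul_same, eSingle_mul_ne _ _ hxz.ne', sub_zero]
  have b2 : ⁅eSingle K y z hyz.le, eSingle K z z le_rfl⁆ = eSingle K y z hyz.le := by
    rw [Ring.lie_def, eSingle_mul_same, eSingle_mul_ne _ _ hyz.ne', sub_zero]
  have b3 : ⁅eSingle K z z le_rfl, eSingle K x y hxy.le⁆ = 0 := by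
    rw [Ring.lie_def, eSingle_mul_ne _ _ hxz.ne', eSingle_mul_ne _ _ hyz.ne, sub_zero]
  have b4 : ⁅eSingle K y z hyz.le, eSingle K x x le_rfl⁆ = 0 := by
    rw [Ring.lie_def, eSingle_mul_ne _ _ hxz.ne', eSingle_mul_ne _ _ hxy.ne, sub_zero]
  have b5 : ⁅eSingle K x x le_rfl, eSingle K x y hxy.le⁆ = eSingle K x y hxy.le := by
    rw [Ring.lie_def, eSingle_mul_same, eSingle_mul_ne _ _ hxy.ne', sub_zero]
  rw [b1, b2, b3, zero_lie, add_zero] at e1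
  rw [b1, b4, b5, zero_lie, add_zero] at e2
  constructor
  · rw [← lie_skew (φ (eSingle K x y hxy.le))]
    exact (eq_neg_of_add_eq_zero_left e1).symm
  · rw [← lie_skew (φ (eSingle K x x le_rfl))]
    exact eq_neg_of_add_eq_zero_right e2
end

section
/- For all pairs x < y, z < w and u < v in X, at least one of the three commutators [e_{xy}, e_{zw}], [e_{zw}, e_{uv}] and [e_{uv}, e_{xy}] is zero in I(X,K). -/
open IncidenceAlgebra

theorem eSingle_mul_zero {K : Type*} [Field K] {X : Type*} [PartialOrder X] [DecidableEq X]
    [LocallyFiniteOrder X] {x y z w : X} (hxy : x ≤ y) (hzw : z ≤ w) (h : y ≠ z) :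
    eSingle K x y hxy * eSingle K z w hzw = 0 := by
  ext a b _
  rw [IncidenceAlgebra.mul_apply, IncidenceAlgebra.zero_apply]
  refine Finset.sum_eq_zero fun t _ => ?_
  change (if a = x ∧ t = y then (1 : K) else 0) * (if t = z ∧ b = w then (1 : K) else 0) = 0
  split_ifs with h1 h2
  · exact absurd (h1.2.symm.trans h2.1) h
  all_goals simp

theorem eSingle_lie_zero {K : Type*} [Field K] {X : Type*} [PartialOrder X] [DecidableEq X]
    [LocallyFiniteOrder X] {x y z w : X} (hxy : x ≤ y) (hzw : z ≤ w) (h : y ≠ z) (h' : w ≠ x) :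
    ⁅eSingle K x y hxy, eSingle K z w hzw⁆ = 0 := by
  rw [Ring.lie_def, eSingle_mul_zero _ _ h, eSingle_mul_zero _ _ h', sub_zero]

theorem stmt2 {K : Type*} [Field K] {X : Type*} [PartialOrder X] [Fintype X] [DecidableEq X]
    [LocallyFiniteOrder X]
    {x y z w u v : X} (hxy : x < y) (hzw : z < w) (huv : u < v) :
    ⁅eSingle K x y hxy.le, eSingle K z w hzw.le⁆ = 0 ∨
    ⁅eSingle K z w hzw.le, eSingle K u v huv.le⁆ = 0 ∨
    ⁅eSingle K u v huv.le, eSingle K x y hxy.le⁆ = 0 := by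
  by_cases h1 : y = z ∨ w = x
  · by_cases h2 : w = u ∨ v = z
    · by_cases h3 : v = x ∨ y = u
      · exfalso
        rcases h1 with rfl | rfl <;> rcases h2 with h2 | h2 <;> rcases h3 with h3 | h3 <;>
          subst_vars <;>
          first
          | exact lt_irrefl _ ‹_›
          | exact lt_irrefl _ (hxy.trans hzw)
          | exact lt_irrefl _ (hxy.trans (hzw.trans huv))
          | exact lt_irrefl _ (hxy.trans (huv.trans hzw))
      · push Not at h3
        exact Or.inr (Or.inr (eSingle_lie_zero _ _ h3.1 h3.2))
    · push Not at h2
      exact Or.inr (Or.inl (eSingle_lie_zero _ _ h2.1 h2.2))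
  · push Not at h1
    exact Or.inl (eSingle_lie_zero _ _ h1.1 h1.2)
end

section
/- Let φ be a Lie algebra automorphism of I(X,K) which is a regular Hom-Lie structure on I(X,K). Then for every pair x < y in X there exists a (necessarily unique) nonzero scalar c(x,y) ∈ K such that φ(e_{xy}) − c(x,y)·e_{xy} ∈ J^{l(x,y)+1}; moreover c(x,y) = 1 whenever x ∉ Min(X) or y ∉ Max(X). -/
open IncidenceAlgebra

attribute [local instance] LieRing.ofAssociativeRing

section aux
variable {K : Type*} [Field K] {X : Type*} [PartialOrder X]

theorem chain_le_card [Fintype X] {n : ℕ} {c : Fin (n + 1) → X} (hc : StrictMono c) :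
    n ≤ Fintype.card X := by
  have := Fintype.card_le_of_injective c hc.injective
  simp at this
  omega

theorem le_chainLen [Fintype X] {n : ℕ} {x y : X}
    (h : ∃ c : Fin (n + 1) → X, StrictMono c ∧ c 0 = x ∧ c (Fin.last n) = y) :
    n ≤ chainLen x y := by
  refine le_csSup ⟨Fintype.card X, ?_⟩ h
  rintro k ⟨c, hc, -⟩
  exact chain_le_card hc

theorem exists_chain [Fintype X] {x y : X} (hxy : x ≤ y) :
    ∃ c : Fin (chainLen x y + 1) → X, StrictMono c ∧ c 0 = x ∧ c (Fin.last _) = y := by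
  have hne : {n : ℕ | ∃ c : Fin (n + 1) → X, StrictMono c ∧ c 0 = x ∧ c (Fin.last n) = y}.Nonempty := by
    rcases hxy.eq_or_lt with h | h
    · refine ⟨0, fun _ => x, ?_, rfl, h⟩
      intro a b hab
      exact absurd hab (by omega)
    · refine ⟨1, ![x, y], ?_, rfl, rfl⟩
      rw [Fin.strictMono_iff_lt_succ]
      intro i
      fin_cases i
      simpa using h
  exact Nat.sSup_mem hne ⟨Fintype.card X, by
    rintro k ⟨c, hc, -⟩
    exact chain_le_card hc⟩

theorem chainLen_snoc [Fintype X] {x y z : X} (hxy : x ≤ y) (hyz : y < z) :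
    chainLen x y + 1 ≤ chainLen x z := by
  obtain ⟨c, hc, h0, hl⟩ := exists_chain hxy
  refine le_chainLen ⟨Fin.snoc c z, ?_, ?_, by simp⟩
  · rw [Fin.strictMono_iff_lt_succ]
    intro i
    refine Fin.lastCases ?_ (fun j => ?_) i
    · simp only [Fin.snoc_castSucc, Fin.succ_last, Fin.snoc_last, hl, hyz]
    · rw [← Fin.castSucc_succ, Fin.snoc_castSucc, Fin.snoc_castSucc]
      exact hc Fin.castSucc_lt_succ
  · rw [← Fin.castSucc_zero, Fin.snoc_castSucc, h0]

theorem chainLen_cons [Fintype X] {x y z : X} (hxy : x < y) (hyz : y ≤ z) :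
    chainLen y z + 1 ≤ chainLen x z := by
  obtain ⟨c, hc, h0, hl⟩ := exists_chain hyz
  refine le_chainLen ⟨Fin.cons x c, ?_, by simp, ?_⟩
  · rw [Fin.strictMono_iff_lt_succ]
    intro i
    refine Fin.cases ?_ (fun j => ?_) i
    · simp only [Fin.castSucc_zero, Fin.cons_zero, Fin.cons_succ, h0, hxy]
    · rw [← Fin.succ_castSucc, Fin.cons_succ, Fin.cons_succ]
      exact hc Fin.castSucc_lt_succ
  · rw [← Fin.succ_last, Fin.cons_succ, hl]

theorem one_le_chainLen [Fintype X] {x y : X} (hxy : x < y) : 1 ≤ chainLen x y :=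
  (Nat.le_add_left _ _).trans (chainLen_snoc le_rfl hxy)

theorem exists_split [Fintype X] {x y : X} (hxy : x < y) {m : ℕ} (hm : 1 ≤ m)
    (h : m + 1 ≤ chainLen x y) : ∃ z, x < z ∧ z < y ∧ m ≤ chainLen x z := by
  obtain ⟨c, hc, h0, hl⟩ := exists_chain hxy.le
  obtain ⟨k, hk⟩ : ∃ k, chainLen x y = k + 1 := ⟨chainLen x y - 1, by omega⟩
  generalize chainLen x y = N at *
  subst hk
  refine ⟨c (Fin.last k).castSucc, ?_, ?_, ?_⟩
  · rw [← h0]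
    apply hc
    rw [Fin.lt_def]
    simp
    omega
  · rw [← hl]
    apply hc
    exact Fin.castSucc_lt_last _
  · refine le_trans (by omega : m ≤ k) (le_chainLen ⟨fun i => c i.castSucc, ?_, ?_, rfl⟩)
    · intro a b hab
      exact hc (by simpa using hab)
    · simpa using h0

/-- coefficientwise description of `J^m`. -/
def PJ (m : ℕ) (f : IncidenceAlgebra K X) : Prop :=
  ∀ u v, f u v ≠ 0 → u < v ∧ m ≤ chainLen u v

theorem le_of_ne {f : IncidenceAlgebra K X} {u v : X} (h : f u v ≠ 0) : u ≤ v := by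
  by_contra hc
  exact h (apply_eq_zero_of_not_le hc f)

variable [DecidableEq X]

theorem eS_apply {x y : X} (h : x ≤ y) (u v : X) :
    eSingle K x y h u v = if u = x ∧ v = y then 1 else 0 := rfl

theorem PJ_of_mem {m : ℕ} {f : IncidenceAlgebra K X} (hf : f ∈ Jpow K (X := X) m) : PJ m f := by
  unfold Jpow at hf
  induction hf using Submodule.span_induction with
  | mem f hf =>
    obtain ⟨x, y, h, hm, rfl⟩ := hf
    intro u v huv
    rw [eS_apply] at huv
    split_ifs at huv with h'
    · obtain ⟨rfl, rfl⟩ := h'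
      exact ⟨h, hm⟩
    · exact absurd rfl huv
  | zero => intro u v h; exact absurd rfl h
  | add f g _ _ hf hg =>
    intro u v h
    by_cases h1 : f u v = 0
    · apply hg
      intro h2
      exact h (by rw [IncidenceAlgebra.add_apply, h1, h2, add_zero])
    · exact hf _ _ h1
  | smul a f _ hf =>
    intro u v h
    apply hf
    intro h2
    exact h (by rw [IncidenceAlgebra.constSMul_apply, h2, smul_zero])

theorem sum_apply' {ι : Type*} (s : Finset ι) (F : ι → IncidenceAlgebra K X) (u v : X) :
    (∑ i ∈ s, F i) u v = ∑ i ∈ s, F i u v := by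
  classical
  induction s using Finset.induction_on with
  | empty => rfl
  | insert a s ha ih => rw [Finset.sum_insert ha, Finset.sum_insert ha, IncidenceAlgebra.add_apply, ih]

theorem mem_of_PJ [Fintype X] {m : ℕ} {f : IncidenceAlgebra K X} (hf : PJ m f) :
    f ∈ Jpow K (X := X) m := by
  classical
  have key : f = ∑ p : X × X, if h : p.1 ≤ p.2 then f p.1 p.2 • eSingle K p.1 p.2 h else 0 := by
    ext u v huv
    rw [sum_apply', Finset.sum_eq_single (u, v)]
    · simp [huv, eS_apply]
    · rintro ⟨a, b⟩ - hab
      by_cases h : a ≤ b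
      · simp only [h, dite_true]
        rw [IncidenceAlgebra.constSMul_apply, eS_apply, if_neg, smul_zero]
        rintro ⟨rfl, rfl⟩
        exact hab rfl
      · simp [h]
    · simp
  rw [key]
  refine Submodule.sum_mem _ fun p _ => ?_
  split_ifs with h
  · by_cases h0 : f p.1 p.2 = 0
    · rw [h0, zero_smul]; exact Submodule.zero_mem _
    · exact Submodule.smul_mem _ _ (Submodule.subset_span ⟨_, _, (hf _ _ h0).1, (hf _ _ h0).2, rfl⟩)
  · exact Submodule.zero_mem _

variable [LocallyFiniteOrder X]

theorem eS_mul {x y : X} (h : x ≤ y) (f : IncidenceAlgebra K X) (u v : X) :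
    (eSingle K x y h * f) u v = if u = x then f y v else 0 := by
  rw [IncidenceAlgebra.mul_apply]
  simp only [eS_apply]
  split_ifs with hu
  · subst hu
    by_cases hv : y ≤ v
    · rw [Finset.sum_eq_single y] <;> simp +contextual [h, hv]
    · rw [apply_eq_zero_of_not_le hv]
      apply Finset.sum_eq_zero
      intro z hz
      rw [Finset.mem_Icc] at hz
      rw [if_neg, zero_mul]
      rintro ⟨-, rfl⟩
      exact hv hz.2
  · simp [hu]

theorem mul_eS {x y : X} (h : x ≤ y) (f : IncidenceAlgebra K X) (u v : X) :
    (f * eSingle K x y h) u v = if v = y then f u x else 0 := by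
  rw [IncidenceAlgebra.mul_apply]
  simp only [eS_apply]
  split_ifs with hu
  · subst hu
    by_cases hv : u ≤ x
    · rw [Finset.sum_eq_single x] <;> simp +contextual [h, hv]
    · rw [apply_eq_zero_of_not_le hv]
      apply Finset.sum_eq_zero
      intro z hz
      rw [Finset.mem_Icc] at hz
      rw [if_neg, mul_zero]
      rintro ⟨rfl, -⟩
      exact hv hz.1
  · simp [hu]

theorem PJ_mul_right [Fintype X] {m : ℕ} {f g : IncidenceAlgebra K X} (hf : PJ m f) (hg : PJ 1 g) :
    PJ (m + 1) (f * g) := by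
  intro u v h
  rw [IncidenceAlgebra.mul_apply] at h
  obtain ⟨z, -, hz⟩ := Finset.exists_ne_zero_of_sum_ne_zero h
  have h1 := hf _ _ (left_ne_zero_of_mul hz)
  have h2 := hg _ _ (right_ne_zero_of_mul hz)
  exact ⟨h1.1.trans h2.1, (Nat.succ_le_succ h1.2).trans (chainLen_snoc h1.1.le h2.1)⟩

theorem PJ_mul_left [Fintype X] {m : ℕ} {f g : IncidenceAlgebra K X} (hf : PJ m f) (hg : PJ 1 g) :
    PJ (m + 1) (g * f) := by
  intro u v h
  rw [IncidenceAlgebra.mul_apply] at h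
  obtain ⟨z, -, hz⟩ := Finset.exists_ne_zero_of_sum_ne_zero h
  have h1 := hg _ _ (left_ne_zero_of_mul hz)
  have h2 := hf _ _ (right_ne_zero_of_mul hz)
  exact ⟨h1.1.trans h2.1, (Nat.succ_le_succ h2.2).trans (chainLen_cons h1.1 h2.1.le)⟩

theorem PJ_sub {m : ℕ} {f g : IncidenceAlgebra K X} (hf : PJ m f) (hg : PJ m g) :
    PJ m (f - g) := by
  intro u v h
  by_cases h1 : f u v = 0
  · apply hg
    intro h2
    exact h (by rw [IncidenceAlgebra.sub_apply, h1, h2, sub_zero])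
  · exact hf _ _ h1

theorem mul_diag (f g : IncidenceAlgebra K X) (u : X) : (f * g) u u = f u u * g u u := by
  rw [IncidenceAlgebra.mul_apply]; simp

theorem PJ_lie_one [Fintype X] (f g : IncidenceAlgebra K X) : PJ 1 ⁅f, g⁆ := by
  intro u v h
  have hle := le_of_ne h
  have hne : u ≠ v := by
    rintro rfl
    apply h
    rw [Ring.lie_def, IncidenceAlgebra.sub_apply, mul_diag, mul_diag]
    ring
  exact ⟨lt_of_le_of_ne hle hne, one_le_chainLen (lt_of_le_of_ne hle hne)⟩

theorem lie_left {x y : X} (h : x < y) :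
    ⁅eSingle K x x le_rfl, eSingle K x y h.le⁆ = eSingle K x y h.le := by
  ext u v _
  rw [Ring.lie_def, IncidenceAlgebra.sub_apply, eS_mul, mul_eS]
  simp only [eS_apply]
  have := h.ne
  grind

theorem lie_right {x y : X} (h : x < y) :
    ⁅eSingle K x y h.le, eSingle K y y le_rfl⁆ = eSingle K x y h.le := by
  ext u v _
  rw [Ring.lie_def, IncidenceAlgebra.sub_apply, eS_mul, mul_eS]
  simp only [eS_apply]
  have := h.ne
  grind

theorem lie_comp {x z y : X} (h : x < z) (h' : z < y) :
    ⁅eSingle K x z h.le, eSingle K z y h'.le⁆ = eSingle K x y (h.trans h').le := by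
  ext u v _
  rw [Ring.lie_def, IncidenceAlgebra.sub_apply, eS_mul, mul_eS]
  simp only [eS_apply]
  have := h.ne
  have := (h.trans h').ne
  grind

theorem eS_lie_zero {x y z w : X} (h : x ≤ y) (h' : z ≤ w) (h1 : y ≠ z) (h2 : w ≠ x) :
    ⁅eSingle K x y h, eSingle K z w h'⁆ = 0 := by
  ext u v _
  rw [Ring.lie_def, IncidenceAlgebra.sub_apply, eS_mul, mul_eS, IncidenceAlgebra.zero_apply]
  simp only [eS_apply]
  grind

theorem PJ_eS {x y : X} (h : x < y) : PJ (chainLen x y) (eSingle K x y h.le) := by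
  intro u v huv
  rw [eS_apply] at huv
  split_ifs at huv with h'
  · obtain ⟨rfl, rfl⟩ := h'
    exact ⟨h, le_rfl⟩
  · exact absurd rfl huv

theorem map_eS_PJ [Fintype X] (φ : IncidenceAlgebra K X ≃ₗ⁅K⁆ IncidenceAlgebra K X) (m : ℕ) :
    ∀ {x y : X} (h : x < y), m + 1 ≤ chainLen x y → PJ (m + 1) (φ (eSingle K x y h.le)) := by
  induction m with
  | zero =>
    intro x y h _
    rw [← lie_left h, LieEquiv.map_lie]
    exact PJ_lie_one _ _
  | succ m ih =>
    intro x y h hm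
    obtain ⟨z, h1, h2, h3⟩ := exists_split h (by omega) hm
    rw [← lie_comp h1 h2, LieEquiv.map_lie, Ring.lie_def]
    have a := ih h1 h3
    have b : PJ 1 (φ (eSingle K z y h2.le)) := by
      rw [← lie_left h2, LieEquiv.map_lie]
      exact PJ_lie_one _ _
    exact PJ_sub (PJ_mul_right a b) (PJ_mul_left a b)

theorem map_Jpow [Fintype X] (φ : IncidenceAlgebra K X ≃ₗ⁅K⁆ IncidenceAlgebra K X) (m : ℕ)
    {f : IncidenceAlgebra K X} (hf : f ∈ Jpow K (X := X) (m + 1)) :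
    φ f ∈ Jpow K (X := X) (m + 1) := by
  unfold Jpow at hf
  induction hf using Submodule.span_induction with
  | mem f hf =>
    obtain ⟨x, y, h, hm, rfl⟩ := hf
    exact mem_of_PJ (map_eS_PJ φ m h hm)
  | zero => rw [map_zero]; exact Submodule.zero_mem _
  | add f g _ _ hf hg => rw [map_add]; exact Submodule.add_mem _ hf hg
  | smul a f _ hf => rw [map_smul]; exact Submodule.smul_mem _ _ hf

theorem coef [Fintype X] {m : ℕ} {F G : IncidenceAlgebra K X} (hG : PJ m G) {u v : X} (huv : u ≤ v)
    (h : chainLen u v = m) : ⁅F, G⁆ u v = (F u u - F v v) * G u v := by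
  rw [Ring.lie_def, IncidenceAlgebra.sub_apply, IncidenceAlgebra.mul_apply,
    IncidenceAlgebra.mul_apply, Finset.sum_eq_single u, Finset.sum_eq_single v]
  · ring
  · intro z hz hzv
    rw [Finset.mem_Icc] at hz
    by_contra h0
    have h1 := hG _ _ (left_ne_zero_of_mul h0)
    have := chainLen_snoc hz.1 (lt_of_le_of_ne hz.2 hzv)
    omega
  · simp [huv]
  · intro z hz hzv
    rw [Finset.mem_Icc] at hz
    by_contra h0
    have h1 := hG _ _ (right_ne_zero_of_mul h0)
    have := chainLen_cons (lt_of_le_of_ne hz.1 (Ne.symm hzv)) hz.2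
    omega
  · simp [huv]

/-- Hom-Jacobi: `φ(e_z)` has equal diagonal entries away from `z`. -/
theorem diag_eq {φ : IncidenceAlgebra K X ≃ₗ⁅K⁆ IncidenceAlgebra K X} (hφ : HomJacobi ⇑φ)
    {u v z : X} (h : u < v) (hu : z ≠ u) (hv : z ≠ v) :
    φ (eSingle K z z le_rfl) u u = φ (eSingle K z z le_rfl) v v := by
  have := hφ (eSingle K u u le_rfl) (eSingle K u v h.le) (eSingle K z z le_rfl)
  rw [lie_left h, eS_lie_zero h.le le_rfl hv.symm hu, eS_lie_zero le_rfl le_rfl hu hu.symm, zero_lie,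
    zero_lie, add_zero, add_zero] at this
  have := congrArg (fun f : IncidenceAlgebra K X => f u v) this
  simp only [Ring.lie_def, IncidenceAlgebra.sub_apply, eS_mul, mul_eS, if_true,
    IncidenceAlgebra.zero_apply] at this
  exact (sub_eq_zero.mp this).symm

theorem PJ_phi [Fintype X] (φ : IncidenceAlgebra K X ≃ₗ⁅K⁆ IncidenceAlgebra K X)
    {x y : X} (h : x < y) : PJ (chainLen x y) (φ (eSingle K x y h.le)) := by
  have := one_le_chainLen h
  have h2 := map_eS_PJ φ (chainLen x y - 1) h (by omega)
  rwa [Nat.sub_add_cancel this] at h2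

theorem coef_left [Fintype X] (φ : IncidenceAlgebra K X ≃ₗ⁅K⁆ IncidenceAlgebra K X)
    {x y : X} (h : x < y) {u v : X} (huv : chainLen u v = chainLen x y)
    (h0 : φ (eSingle K x y h.le) u v ≠ 0) :
    φ (eSingle K x x le_rfl) u u - φ (eSingle K x x le_rfl) v v = 1 := by
  have h1 := coef (F := φ (eSingle K x x le_rfl)) (PJ_phi φ h) (le_of_ne h0) huv
  rw [← LieEquiv.map_lie, lie_left h] at h1
  exact mul_right_cancel₀ h0 (by rw [← h1, one_mul])

theorem coef_right [Fintype X] (φ : IncidenceAlgebra K X ≃ₗ⁅K⁆ IncidenceAlgebra K X)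
    {x y : X} (h : x < y) {u v : X} (huv : chainLen u v = chainLen x y)
    (h0 : φ (eSingle K x y h.le) u v ≠ 0) :
    φ (eSingle K y y le_rfl) v v - φ (eSingle K y y le_rfl) u u = 1 := by
  have h1 := coef (F := φ (eSingle K y y le_rfl)) (PJ_phi φ h) (le_of_ne h0) huv
  rw [← LieEquiv.map_lie, ← lie_skew, lie_right h, map_neg, IncidenceAlgebra.neg_apply] at h1
  exact mul_right_cancel₀ h0 (by linear_combination -(-h1))

theorem coef_off [Fintype X] {φ : IncidenceAlgebra K X ≃ₗ⁅K⁆ IncidenceAlgebra K X}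
    (hφ : HomJacobi ⇑φ) {x y : X} (h : x < y) {u v : X} (huv : chainLen u v = chainLen x y)
    (h0 : φ (eSingle K x y h.le) u v ≠ 0) : u = x ∧ v = y := by
  have hl : u < v := (PJ_phi φ h _ _ h0).1
  have a := coef_left φ h huv h0
  have b := coef_right φ h huv h0
  have hx : x = u ∨ x = v := by
    by_contra! hc
    rw [diag_eq hφ hl hc.1 hc.2, sub_self] at a
    exact zero_ne_one a
  have hy : y = u ∨ y = v := by
    by_contra! hc
    rw [diag_eq hφ hl hc.1 hc.2, sub_self] at b
    exact zero_ne_one b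
  rcases hx with rfl | rfl <;> rcases hy with rfl | rfl
  · exact absurd h (lt_irrefl _)
  · exact ⟨rfl, rfl⟩
  · exact absurd (h.trans hl) (lt_irrefl _)
  · exact absurd h (lt_irrefl _)

theorem phi_sub_mem [Fintype X] {φ : IncidenceAlgebra K X ≃ₗ⁅K⁆ IncidenceAlgebra K X}
    (hφ : HomJacobi ⇑φ) {x y : X} (h : x < y) :
    φ (eSingle K x y h.le) - φ (eSingle K x y h.le) x y • eSingle K x y h.le ∈
      Jpow K (X := X) (chainLen x y + 1) := by
  apply mem_of_PJ
  intro u v h0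
  rw [IncidenceAlgebra.sub_apply, IncidenceAlgebra.constSMul_apply, eS_apply] at h0
  split_ifs at h0 with h'
  · obtain ⟨rfl, rfl⟩ := h'
    simp at h0
  · rw [smul_zero, sub_zero] at h0
    have h1 := PJ_phi φ h _ _ h0
    refine ⟨h1.1, ?_⟩
    rcases h1.2.eq_or_lt with h2 | h2
    · exact absurd (coef_off hφ h h2.symm h0) h'
    · exact h2

theorem phi_ne [Fintype X] {φ : IncidenceAlgebra K X ≃ₗ⁅K⁆ IncidenceAlgebra K X}
    (hφ : HomJacobi ⇑φ) {x y : X} (h : x < y) : φ (eSingle K x y h.le) x y ≠ 0 := by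
  intro h0
  have h1 := phi_sub_mem hφ h
  rw [h0, zero_smul, sub_zero] at h1
  have h2 := map_Jpow φ.symm _ h1
  rw [LieEquiv.symm_apply_apply] at h2
  have h3 := (PJ_of_mem h2 x y (by simp [eS_apply])).2
  omega

theorem coef_uniq [Fintype X] {φ : IncidenceAlgebra K X ≃ₗ⁅K⁆ IncidenceAlgebra K X}
    {x y : X} (h : x < y) {c : K}
    (hc : φ (eSingle K x y h.le) - c • eSingle K x y h.le ∈
      Jpow K (X := X) (chainLen x y + 1)) : c = φ (eSingle K x y h.le) x y := by
  by_contra hne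
  have := (PJ_of_mem hc x y (by
    rw [IncidenceAlgebra.sub_apply, IncidenceAlgebra.constSMul_apply, eS_apply]
    simp only [and_self, if_true, smul_eq_mul, mul_one]
    exact sub_ne_zero.mpr (Ne.symm hne))).2
  omega

theorem coef_one_right [Fintype X] {φ : IncidenceAlgebra K X ≃ₗ⁅K⁆ IncidenceAlgebra K X}
    (hφ : HomJacobi ⇑φ) {x y w : X} (h : x < y) (h' : y < w) :
    φ (eSingle K y w h'.le) y w = 1 := by
  have := hφ (eSingle K x x le_rfl) (eSingle K x y h.le) (eSingle K y w h'.le)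
  rw [lie_left h, lie_comp h h', eS_lie_zero h'.le le_rfl (h.trans h').ne' h.ne, zero_lie,
    add_zero] at this
  have := congrArg (fun f : IncidenceAlgebra K X => f x w) this
  simp only [Ring.lie_def, IncidenceAlgebra.sub_apply, IncidenceAlgebra.add_apply, eS_mul, mul_eS,
    if_true, IncidenceAlgebra.zero_apply, if_neg h'.ne'] at this
  have h1 := coef_left φ (h.trans h') rfl (phi_ne hφ (h.trans h'))
  linear_combination this + h1

theorem coef_one_left [Fintype X] {φ : IncidenceAlgebra K X ≃ₗ⁅K⁆ IncidenceAlgebra K X}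
    (hφ : HomJacobi ⇑φ) {x y w : X} (h : x < y) (h' : y < w) :
    φ (eSingle K x y h.le) x y = 1 := by
  have := hφ (eSingle K x y h.le) (eSingle K y w h'.le) (eSingle K w w le_rfl)
  rw [lie_right h', lie_comp h h', eS_lie_zero le_rfl h.le (h.trans h').ne' h'.ne, zero_lie,
    add_zero] at this
  have := congrArg (fun f : IncidenceAlgebra K X => f x w) this
  simp only [Ring.lie_def, IncidenceAlgebra.sub_apply, IncidenceAlgebra.add_apply, eS_mul, mul_eS,
    if_true, IncidenceAlgebra.zero_apply, if_neg h.ne] at this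
  have h1 := coef_right φ (h.trans h') rfl (phi_ne hφ (h.trans h'))
  linear_combination h1 - this

end aux

theorem stmt3 {K : Type*} [Field K] {X : Type*} [PartialOrder X] [Fintype X] [DecidableEq X]
    [LocallyFiniteOrder X]
    (hcard : 1 < Fintype.card X)
    (hconn : ∀ x y : X, Relation.ReflTransGen (fun a b : X => a ≤ b ∨ b ≤ a) x y)
    (φ : IncidenceAlgebra K X ≃ₗ⁅K⁆ IncidenceAlgebra K X) (hφ : HomJacobi ⇑φ)
    {x y : X} (hxy : x < y) :
    (∃! c : K, c ≠ 0 ∧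
        φ (eSingle K x y hxy.le) - c • eSingle K x y hxy.le ∈
          Jpow K (X := X) (chainLen x y + 1)) ∧
    ∀ c : K, c ≠ 0 →
      φ (eSingle K x y hxy.le) - c • eSingle K x y hxy.le ∈
        Jpow K (X := X) (chainLen x y + 1) →
      (¬IsMin x ∨ ¬IsMax y) → c = 1 := by
  refine ⟨⟨_, ⟨phi_ne hφ hxy, phi_sub_mem hφ hxy⟩, fun c hc => coef_uniq hxy hc.2⟩, ?_⟩
  intro c _ hc hm
  rw [coef_uniq hxy hc]
  rcases hm with hm | hm
  · obtain ⟨w, hw⟩ := not_isMin_iff.mp hm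
    exact coef_one_right hφ hw hxy
  · obtain ⟨w, hw⟩ := not_isMax_iff.mp hm
    exact coef_one_left hφ hxy hw
end

section
/- Let σ : {(x,y) ∈ X² : x≤y} → K∖{0} be multiplicative with σ(x,y) = 1 for every x < y such that x ∉ Min(X) or y ∉ Max(X), and let ν : I(X,K) → I(X,K) be a K-linear map all of whose values are scalar multiples of δ and which vanishes on J(I(X,K)). If the map φ := M_σ + ν is bijective, then φ is a regular Hom-Lie structure on I(X,K). -/
open IncidenceAlgebra

attribute [local instance 100] LieRing.ofAssociativeRing

theorem diag_bracket {K : Type*} [Field K] {X : Type*} [PartialOrder X] [DecidableEq X]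
    [LocallyFiniteOrder X] (a b : IncidenceAlgebra K X) (x : X) : ⁅a, b⁆ x x = 0 := by
  rw [LieRing.of_associative_ring_bracket, IncidenceAlgebra.sub_apply, mul_apply, mul_apply]
  simp [mul_comm]

theorem Mmul_apply' {K : Type*} [Field K] {X : Type*} [PartialOrder X]
    (σ : X → X → K) (f : IncidenceAlgebra K X) (x y : X) :
    Mmul K σ f x y = σ x y * f x y := rfl

theorem Mmul_mul {K : Type*} [Field K] {X : Type*} [PartialOrder X] [DecidableEq X]
    [LocallyFiniteOrder X] (σ : X → X → K)
    (hσm : ∀ x y z : X, x ≤ y → y ≤ z → σ x z = σ x y * σ y z)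
    (a b : IncidenceAlgebra K X) : Mmul K σ (a * b) = Mmul K σ a * Mmul K σ b := by
  ext x y hxy
  rw [Mmul_apply', mul_apply, mul_apply, Finset.mul_sum]
  refine Finset.sum_congr rfl fun z hz => ?_
  rw [Finset.mem_Icc] at hz
  rw [Mmul_apply', Mmul_apply', hσm x z y hz.1 hz.2]
  ring

theorem Mmul_sub {K : Type*} [Field K] {X : Type*} [PartialOrder X]
    (σ : X → X → K) (a b : IncidenceAlgebra K X) :
    Mmul K σ (a - b) = Mmul K σ a - Mmul K σ b := by
  ext x y hxy
  simp only [Mmul_apply', IncidenceAlgebra.sub_apply, mul_sub]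

theorem bracket_Mmul {K : Type*} [Field K] {X : Type*} [PartialOrder X] [DecidableEq X]
    [LocallyFiniteOrder X] (σ : X → X → K)
    (hd : ∀ x y : X, x ≤ y → (¬IsMin x ∨ ¬IsMax y) → σ x y = 1)
    (g c : IncidenceAlgebra K X) (hg : ∀ x, g x x = 0) : ⁅g, Mmul K σ c⁆ = ⁅g, c⁆ := by
  rw [LieRing.of_associative_ring_bracket, LieRing.of_associative_ring_bracket]
  congr 1
  · ext x y hxy
    rw [mul_apply, mul_apply]
    refine Finset.sum_congr rfl fun z hz => ?_
    rw [Finset.mem_Icc] at hz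
    rcases hz.1.eq_or_lt with h | h
    · rw [← h, hg]; ring
    · rw [Mmul_apply', hd z y hz.2 (Or.inl h.not_isMin), one_mul]
  · ext x y hxy
    rw [mul_apply, mul_apply]
    refine Finset.sum_congr rfl fun z hz => ?_
    rw [Finset.mem_Icc] at hz
    rcases hz.2.eq_or_lt with h | h
    · rw [h, hg]; ring
    · rw [Mmul_apply', hd x z hz.1 (Or.inr h.not_isMax), one_mul]

theorem stmt4 {K : Type*} [Field K] {X : Type*} [PartialOrder X] [Fintype X] [DecidableEq X]
    [LocallyFiniteOrder X]
    (hcard : 1 < Fintype.card X)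
    (hconn : ∀ x y : X, Relation.ReflTransGen (fun a b : X => a ≤ b ∨ b ≤ a) x y)
    (σ : X → X → K)
    (hσ0 : ∀ x y : X, x ≤ y → σ x y ≠ 0)
    (hσm : ∀ x y z : X, x ≤ y → y ≤ z → σ x z = σ x y * σ y z)
    (hσ1 : ∀ x y : X, x < y → (¬IsMin x ∨ ¬IsMax y) → σ x y = 1)
    (ν : IncidenceAlgebra K X →ₗ[K] IncidenceAlgebra K X)
    (hν1 : ∀ f, ∃ c : K, ν f = c • (1 : IncidenceAlgebra K X))
    (hν2 : ∀ f : IncidenceAlgebra K X, (∀ x, f x x = 0) → ν f = 0)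
    (hbij : Function.Bijective fun f => Mmul K σ f + ν f) :
    IsRegHomLie K (fun f => Mmul K σ f + ν f) := by
  have hdiag : ∀ x, σ x x = 1 := fun x => by
    have h := hσm x x x le_rfl le_rfl
    exact (mul_left_cancel₀ (hσ0 x x le_rfl) (by rw [mul_one]; exact h)).symm
  have hd : ∀ x y : X, x ≤ y → (¬IsMin x ∨ ¬IsMax y) → σ x y = 1 := by
    intro x y hxy h
    rcases hxy.eq_or_lt with h' | h'
    · rw [h', hdiag]
    · exact hσ1 x y h' h
  have hνr : ∀ g f : IncidenceAlgebra K X, ⁅g, ν f⁆ = 0 := by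
    intro g f
    obtain ⟨c, hc⟩ := hν1 f
    rw [hc, LieRing.of_associative_ring_bracket, mul_smul_comm, smul_mul_assoc, mul_one, one_mul,
      sub_self]
  have hνl : ∀ g f : IncidenceAlgebra K X, ⁅ν f, g⁆ = 0 := by
    intro g f
    rw [← lie_skew, hνr, neg_zero]
  refine ⟨?_, ?_⟩
  · let e : IncidenceAlgebra K X →ₗ⁅K⁆ IncidenceAlgebra K X :=
      { toFun := fun f => Mmul K σ f + ν f
        map_add' := fun f g => by
          rw [map_add]
          ext x y hxy
          simp only [Mmul_apply', IncidenceAlgebra.add_apply]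
          ring
        map_smul' := fun c f => by
          rw [map_smul]
          ext x y hxy
          simp only [Mmul_apply', IncidenceAlgebra.add_apply, constSMul_apply, smul_eq_mul, RingHom.id_apply]
          ring
        map_lie' := fun {f g} => by
          rw [hν2 _ (diag_bracket f g), add_zero, lie_add, add_lie, hνr, hνl, add_zero, add_zero,
            LieRing.of_associative_ring_bracket, LieRing.of_associative_ring_bracket,
            Mmul_sub, Mmul_mul σ hσm, Mmul_mul σ hσm] }
    exact ⟨LieEquiv.ofBijective e hbij, rfl⟩
  · intro a b c
    simp only [lie_add, hνr, add_zero]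
    rw [bracket_Mmul σ hd _ _ (diag_bracket a b), bracket_Mmul σ hd _ _ (diag_bracket b c),
      bracket_Mmul σ hd _ _ (diag_bracket c a)]
    simp only [LieRing.of_associative_ring_bracket]
    noncomm_ring
end

section
/- Suppose X contains a chain of length greater than 1, and fix x < y in X with x not minimal. Let β = δ + e_{xy}. Then β is a unit of I(X,K) and the inner automorphism ξ_β : f ↦ βfβ⁻¹ is a Lie algebra automorphism of I(X,K) which is not a Hom-Lie structure on I(X,K): indeed, for any u < x one has [[e_y,e_u],ξ_β(e_{ux})] + [[e_u,e_{ux}],ξ_β(e_y)] + [[e_{ux},e_y],ξ_β(e_u)] = e_{uy} ≠ 0. -/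
open IncidenceAlgebra

attribute [local instance 100] LieRing.ofAssociativeRing

theorem eS_mul_s6 {K : Type*} [Field K] {X : Type*} [PartialOrder X] [DecidableEq X]
    [LocallyFiniteOrder X] (a b c : X) (h : a ≤ b) (h' : b ≤ c) :
    eSingle K a b h * eSingle K b c h' = eSingle K a c (h.trans h') := by
  ext u v huv
  rw [mul_apply]
  simp only [eSingle, coe_mk]
  rw [Finset.sum_eq_single b]
  · by_cases h1 : u = a <;> by_cases h2 : v = c <;> simp [h1, h2]
  · intro z _ hz
    simp [hz]
  · intro hb
    by_cases h1 : u = a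
    · by_cases h2 : v = c
      · subst h1 h2
        exact absurd (Finset.mem_Icc.2 ⟨h, h'⟩) hb
      · simp [h2]
    · simp [h1]

theorem eS_mul_zero {K : Type*} [Field K] {X : Type*} [PartialOrder X] [DecidableEq X]
    [LocallyFiniteOrder X] (a b c d : X) (h : a ≤ b) (h' : c ≤ d) (hne : b ≠ c) :
    eSingle K a b h * eSingle K c d h' = 0 := by
  ext u v huv
  rw [mul_apply]
  simp only [eSingle, coe_mk]
  apply Finset.sum_eq_zero
  intro z _
  by_cases hz : z = b
  · subst hz
    simp [hne]
  · simp [hz]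

theorem stmt6 {K : Type*} [Field K] {X : Type*} [PartialOrder X] [Fintype X] [DecidableEq X]
    [LocallyFiniteOrder X]
    (hcard : 1 < Fintype.card X)
    (hconn : ∀ x y : X, Relation.ReflTransGen (fun a b : X => a ≤ b ∨ b ≤ a) x y)
    (hlen : ∃ a b c : X, a < b ∧ b < c)
    {x y : X} (hxy : x < y) (hx : ¬IsMin x) :
    IsUnit (1 + eSingle K x y hxy.le) ∧
    (∃ e : IncidenceAlgebra K X ≃ₗ⁅K⁆ IncidenceAlgebra K X,
        ⇑e = xiMap (1 + eSingle K x y hxy.le)) ∧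
    ¬HomJacobi (xiMap (1 + eSingle K x y hxy.le)) ∧
    ∀ u : X, ∀ hu : u < x,
      ⁅⁅eSingle K y y le_rfl, eSingle K u u le_rfl⁆,
          xiMap (1 + eSingle K x y hxy.le) (eSingle K u x hu.le)⁆ +
      ⁅⁅eSingle K u u le_rfl, eSingle K u x hu.le⁆,
          xiMap (1 + eSingle K x y hxy.le) (eSingle K y y le_rfl)⁆ +
      ⁅⁅eSingle K u x hu.le, eSingle K y y le_rfl⁆,
          xiMap (1 + eSingle K x y hxy.le) (eSingle K u u le_rfl)⁆ =
        eSingle K u y (hu.le.trans hxy.le) ∧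
      eSingle K u y (hu.le.trans hxy.le) ≠ 0 := by
  have hne := hxy.ne
  have hsq : eSingle K x y hxy.le * eSingle K x y hxy.le = 0 := eS_mul_zero _ _ _ _ _ _ hne.symm
  have h1 : (1 + eSingle K x y hxy.le) * (1 - eSingle K x y hxy.le) = 1 := by
    simp [mul_sub, add_mul, hsq]
  have h2 : (1 - eSingle K x y hxy.le) * (1 + eSingle K x y hxy.le) = 1 := by
    simp [sub_mul, mul_add, hsq]
  let U : (IncidenceAlgebra K X)ˣ := ⟨_, _, h1, h2⟩
  have hinv : Ring.inverse (1 + eSingle K x y hxy.le) = 1 - eSingle K x y hxy.le :=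
    Ring.inverse_unit U
  have key : ∀ u : X, ∀ hu : u < x,
      ⁅⁅eSingle K y y le_rfl, eSingle K u u le_rfl⁆,
          xiMap (1 + eSingle K x y hxy.le) (eSingle K u x hu.le)⁆ +
      ⁅⁅eSingle K u u le_rfl, eSingle K u x hu.le⁆,
          xiMap (1 + eSingle K x y hxy.le) (eSingle K y y le_rfl)⁆ +
      ⁅⁅eSingle K u x hu.le, eSingle K y y le_rfl⁆,
          xiMap (1 + eSingle K x y hxy.le) (eSingle K u u le_rfl)⁆ =
        eSingle K u y (hu.le.trans hxy.le) ∧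
      eSingle K u y (hu.le.trans hxy.le) ≠ 0 := by
    intro u hu
    have huy := hu.trans hxy
    constructor
    · have a1 : ⁅eSingle K y y le_rfl, eSingle K u u le_rfl⁆ = 0 := by
        rw [Ring.lie_def, eS_mul_zero _ _ _ _ _ _ huy.ne', eS_mul_zero _ _ _ _ _ _ huy.ne, sub_zero]
      have a2 : ⁅eSingle K u u le_rfl, eSingle K u x hu.le⁆ = eSingle K u x hu.le := by
        rw [Ring.lie_def, eS_mul_s6, eS_mul_zero _ _ _ _ _ _ hu.ne', sub_zero]
      have a3 : ⁅eSingle K u x hu.le, eSingle K y y le_rfl⁆ = 0 := by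
        rw [Ring.lie_def, eS_mul_zero _ _ _ _ _ _ hxy.ne, eS_mul_zero _ _ _ _ _ _ huy.ne', sub_zero]
      have a4 : xiMap (1 + eSingle K x y hxy.le) (eSingle K y y le_rfl)
          = eSingle K y y le_rfl + eSingle K x y hxy.le := by
        unfold xiMap
        rw [hinv, add_mul, one_mul, eS_mul_s6, mul_sub, mul_one, add_mul, hsq,
          eS_mul_zero _ _ _ _ _ _ hxy.ne', add_zero, sub_zero]
      rw [a1, a2, a3, a4, zero_lie, zero_lie, zero_add, add_zero, Ring.lie_def, mul_add, add_mul,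
        eS_mul_s6, eS_mul_zero _ _ _ _ _ _ hxy.ne, eS_mul_zero _ _ _ _ _ _ huy.ne',
        eS_mul_zero _ _ _ _ _ _ huy.ne', zero_add, add_zero, sub_zero]
    · intro h0
      have := congrArg (fun f : IncidenceAlgebra K X => f u y) h0
      simp [eSingle] at this
  refine ⟨⟨U, rfl⟩, ?_, ?_, key⟩
  · let E : IncidenceAlgebra K X ≃ₐ[K] IncidenceAlgebra K X :=
      MulSemiringAction.toAlgEquiv K (IncidenceAlgebra K X) (ConjAct.toConjAct U)
    refine ⟨E.toLieEquiv, ?_⟩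
    funext f
    unfold xiMap
    rw [hinv]
    rfl
  · intro hJ
    obtain ⟨u, hu⟩ := not_isMin_iff.1 hx
    obtain ⟨k1, k2⟩ := key u hu
    exact k2 (k1.symm.trans (hJ _ _ _))
end

section
/- Let β = δ + ρ with ρ ∈ J(I(X,K)), let σ : {(x,y) ∈ X² : x≤y} → K∖{0} be multiplicative with σ(x,y) = 1 for every x < y such that x ∉ Min(X) or y ∉ Max(X), and let ν : I(X,K) → I(X,K) be a K-linear map all of whose values are scalar multiples of δ and which vanishes on J(I(X,K)), such that M_σ + ν is bijective. Then the Lie automorphism φ := ξ_β ∘ (M_σ + ν) is a regular Hom-Lie structure on I(X,K) if and only if ξ_β is a regular Hom-Lie structure on I(X,K). -/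
open IncidenceAlgebra

attribute [local instance 100] LieRing.ofAssociativeRing

theorem ia_mul_zero {K : Type*} [Field K] {X : Type*} [PartialOrder X] [DecidableEq X]
    [LocallyFiniteOrder X] (f g : IncidenceAlgebra K X) (hf : ∀ x, f x x = 0)
    (hg : ∀ x y, g x y ≠ 0 → IsMin x ∧ IsMax y) : f * g = 0 ∧ g * f = 0 := by
  constructor
  · ext u v _
    rw [IncidenceAlgebra.mul_apply, IncidenceAlgebra.zero_apply]
    refine Finset.sum_eq_zero fun z hz => ?_
    rw [Finset.mem_Icc] at hz
    by_cases h : g z v = 0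
    · rw [h, mul_zero]
    · have := (hg _ _ h).1.eq_of_le hz.1
      rw [this, hf, zero_mul]
  · ext u v _
    rw [IncidenceAlgebra.mul_apply, IncidenceAlgebra.zero_apply]
    refine Finset.sum_eq_zero fun z hz => ?_
    rw [Finset.mem_Icc] at hz
    by_cases h : g u z = 0
    · rw [h, zero_mul]
    · have := (hg _ _ h).2.eq_of_le hz.2
      rw [← this, hf, mul_zero]

theorem ia_lie_diag {K : Type*} [Field K] {X : Type*} [PartialOrder X] [DecidableEq X]
    [LocallyFiniteOrder X] (f g : IncidenceAlgebra K X) (x : X) :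
    (f * g - g * f) x x = 0 := by
  rw [IncidenceAlgebra.sub_apply, IncidenceAlgebra.mul_apply, IncidenceAlgebra.mul_apply]
  simp [mul_comm]

theorem exists_lieEquiv {K A : Type*} [Field K] [LieRing A] [LieAlgebra K A] (F : A → A)
    (h1 : ∀ a b, F (a + b) = F a + F b) (h2 : ∀ (c : K) a, F (c • a) = c • F a)
    (h3 : ∀ a b, F ⁅a, b⁆ = ⁅F a, F b⁆) (h4 : Function.Bijective F) :
    ∃ e : A ≃ₗ⁅K⁆ A, ⇑e = F := by
  let L : A →ₗ⁅K⁆ A := { toFun := F, map_add' := h1, map_smul' := h2, map_lie' := h3 _ _ }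
  exact ⟨LieEquiv.ofBijective L h4, rfl⟩

theorem stmt7 {K : Type*} [Field K] {X : Type*} [PartialOrder X] [Fintype X] [DecidableEq X]
    [LocallyFiniteOrder X]
    (hcard : 1 < Fintype.card X)
    (hconn : ∀ x y : X, Relation.ReflTransGen (fun a b : X => a ≤ b ∨ b ≤ a) x y)
    (ρ : IncidenceAlgebra K X) (hρ : ∀ x : X, ρ x x = 0)
    (σ : X → X → K)
    (hσ0 : ∀ x y : X, x ≤ y → σ x y ≠ 0)
    (hσm : ∀ x y z : X, x ≤ y → y ≤ z → σ x z = σ x y * σ y z)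
    (hσ1 : ∀ x y : X, x < y → (¬IsMin x ∨ ¬IsMax y) → σ x y = 1)
    (ν : IncidenceAlgebra K X →ₗ[K] IncidenceAlgebra K X)
    (hν1 : ∀ f, ∃ c : K, ν f = c • (1 : IncidenceAlgebra K X))
    (hν2 : ∀ f : IncidenceAlgebra K X, (∀ x, f x x = 0) → ν f = 0)
    (hbij : Function.Bijective fun f => Mmul K σ f + ν f) :
    IsRegHomLie K (fun f => xiMap (1 + ρ) (Mmul K σ f + ν f)) ↔
      IsRegHomLie K (xiMap (1 + ρ)) := by
  classical
  have hσd : ∀ x, σ x x = 1 := fun x => by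
    have h := hσm x x x le_rfl le_rfl
    exact (mul_eq_left₀ (hσ0 x x le_rfl)).1 h.symm
  have : Nonempty X := Fintype.card_pos_iff.1 (by omega)
  obtain ⟨x0⟩ := this
  have hnt : (1 : IncidenceAlgebra K X) ≠ 0 := fun h => by
    have := congrArg (fun f : IncidenceAlgebra K X => f x0 x0) h
    simp at this
  by_cases hu : IsUnit (1 + ρ)
  swap
  · have hz : ∀ f, xiMap (1 + ρ) f = 0 := fun f => by
      simp [xiMap, Ring.inverse_non_unit _ hu]
    constructor
    · rintro ⟨⟨e, he⟩, -⟩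
      exact absurd (e.injective ((by rw [he]; simp only [hz] : e 1 = e 0))) hnt
    · rintro ⟨⟨e, he⟩, -⟩
      exact absurd (e.injective ((by rw [he]; simp only [hz] : e 1 = e 0))) hnt
  have hi1 := Ring.mul_inverse_cancel _ hu
  have hi2 := Ring.inverse_mul_cancel _ hu
  set γ := Ring.inverse (1 + ρ) with hγ
  have xadd : ∀ a b, xiMap (1 + ρ) (a + b) = xiMap (1 + ρ) a + xiMap (1 + ρ) b := fun a b => by
    simp only [xiMap]; noncomm_ring
  have xsmul : ∀ (c : K) a, xiMap (1 + ρ) (c • a) = c • xiMap (1 + ρ) a := fun c a => by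
    simp only [xiMap, mul_smul_comm, smul_mul_assoc]
  have xmul : ∀ a b, xiMap (1 + ρ) (a * b) = xiMap (1 + ρ) a * xiMap (1 + ρ) b := fun a b => by
    simp only [xiMap, ← hγ]
    calc (1 + ρ) * (a * b) * γ = (1 + ρ) * a * 1 * b * γ := by simp only [mul_one, mul_assoc]
      _ = (1 + ρ) * a * (γ * (1 + ρ)) * b * γ := by rw [hi2]
      _ = _ := by simp only [mul_assoc]
  have xsub : ∀ a b, xiMap (1 + ρ) (a - b) = xiMap (1 + ρ) a - xiMap (1 + ρ) b := fun a b => by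
    simp only [xiMap, mul_sub, sub_mul]
  have xlie : ∀ a b, xiMap (1 + ρ) ⁅a, b⁆ = ⁅xiMap (1 + ρ) a, xiMap (1 + ρ) b⁆ := fun a b => by
    rw [LieRing.of_associative_ring_bracket, LieRing.of_associative_ring_bracket, xsub, xmul, xmul]
  have xone : xiMap (1 + ρ) 1 = 1 := by simp only [xiMap, mul_one]; exact hi1
  have xbij : Function.Bijective (xiMap (1 + ρ)) := by
    refine Function.bijective_iff_has_inverse.2 ⟨fun f => γ * f * (1 + ρ), fun f => ?_, fun f => ?_⟩
    · simp only [xiMap, ← hγ]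
      calc γ * ((1 + ρ) * f * γ) * (1 + ρ) = (γ * (1 + ρ)) * f * (γ * (1 + ρ)) := by
            simp only [mul_assoc]
        _ = f := by rw [hi2, one_mul, mul_one]
    · simp only [xiMap, ← hγ]
      calc (1 + ρ) * (γ * f * (1 + ρ)) * γ = ((1 + ρ) * γ) * f * ((1 + ρ) * γ) := by
            simp only [mul_assoc]
        _ = f := by rw [hi1, one_mul, mul_one]
  have Mapp : ∀ f u v, Mmul K σ f u v = σ u v * f u v := fun _ _ _ => rfl
  have Madd : ∀ a b, Mmul K σ (a + b) = Mmul K σ a + Mmul K σ b := fun a b => by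
    ext u v _
    simp only [Mapp, IncidenceAlgebra.add_apply, mul_add]
  have Msub : ∀ a b, Mmul K σ (a - b) = Mmul K σ a - Mmul K σ b := fun a b => by
    ext u v _
    simp only [Mapp, IncidenceAlgebra.sub_apply, mul_sub]
  have Msmul : ∀ (c : K) a, Mmul K σ (c • a) = c • Mmul K σ a := fun c a => by
    ext u v _
    change σ u v * (c * a u v) = c * (σ u v * a u v)
    ring
  have Mmulm : ∀ a b, Mmul K σ (a * b) = Mmul K σ a * Mmul K σ b := fun a b => by
    ext u v _
    rw [Mapp, IncidenceAlgebra.mul_apply, IncidenceAlgebra.mul_apply, Finset.mul_sum]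
    refine Finset.sum_congr rfl fun z hz => ?_
    rw [Finset.mem_Icc] at hz
    rw [Mapp, Mapp, hσm u z v hz.1 hz.2]
    ring
  have Tlie : ∀ a b, Mmul K σ ⁅a, b⁆ + ν ⁅a, b⁆ = ⁅Mmul K σ a + ν a, Mmul K σ b + ν b⁆ := by
    intro a b
    obtain ⟨c, hc⟩ := hν1 a
    obtain ⟨d, hd⟩ := hν1 b
    simp only [LieRing.of_associative_ring_bracket]
    rw [hν2 _ (ia_lie_diag a b), hc, hd, Msub, Mmulm, Mmulm]
    simp only [add_mul, mul_add, smul_mul_assoc, mul_smul_comm, one_mul, mul_one, smul_add]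
    rw [smul_comm d c]
    abel
  have A1 : ∃ e : IncidenceAlgebra K X ≃ₗ⁅K⁆ IncidenceAlgebra K X, ⇑e = xiMap (1 + ρ) :=
    exists_lieEquiv _ xadd xsmul xlie xbij
  have A2 : ∃ e : IncidenceAlgebra K X ≃ₗ⁅K⁆ IncidenceAlgebra K X,
      ⇑e = (fun f => xiMap (1 + ρ) (Mmul K σ f + ν f)) := by
    refine exists_lieEquiv _ (fun a b => ?_) (fun c a => ?_) (fun a b => ?_) (xbij.comp hbij)
    · rw [← xadd, Madd, map_add]
      congr 1
      abel
    · rw [← xsmul, Msmul, map_smul, smul_add]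
    · rw [Tlie, xlie]
  have key : ∀ a b c : IncidenceAlgebra K X, ⁅⁅a, b⁆, xiMap (1 + ρ) (Mmul K σ c + ν c)⁆ =
      ⁅⁅a, b⁆, xiMap (1 + ρ) c⁆ := by
    intro a b c
    obtain ⟨k, hk⟩ := hν1 c
    have hg : ∀ x y, (Mmul K σ c - c) x y ≠ 0 → IsMin x ∧ IsMax y := by
      intro x y h
      by_contra hn
      apply h
      rw [IncidenceAlgebra.sub_apply, Mapp]
      by_cases hxy : x ≤ y
      · have : σ x y = 1 := by
          rcases hxy.eq_or_lt with rfl | hlt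
          · exact hσd _
          · exact hσ1 x y hlt (by tauto)
        rw [this, one_mul, sub_self]
      · rw [apply_eq_zero_of_not_le hxy c, mul_zero, sub_self]
    generalize hgg : Mmul K σ c - c = g at hg
    have hM : Mmul K σ c = c + g := by rw [← hgg]; abel
    obtain ⟨r1, r2⟩ := ia_mul_zero ρ g hρ hg
    have hgγ : g * γ = g := by
      calc g * γ = (g * (1 + ρ)) * γ := by rw [mul_add, r2, mul_one, add_zero]
        _ = g := by rw [mul_assoc, hi1, mul_one]
    have hxg : xiMap (1 + ρ) g = g := by
      simp only [xiMap, ← hγ]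
      rw [add_mul, r1, one_mul, add_zero, hgγ]
    rw [hM, hk, xadd, xadd, xsmul, xone, hxg]
    simp only [LieRing.of_associative_ring_bracket]
    obtain ⟨s1, s2⟩ := ia_mul_zero (a * b - b * a) g (ia_lie_diag a b) hg
    generalize a * b - b * a = j at s1 s2
    simp only [mul_add, add_mul, s1, s2, mul_smul_comm, smul_mul_assoc, mul_one, one_mul]
    abel
  have hJ : HomJacobi (fun f => xiMap (1 + ρ) (Mmul K σ f + ν f)) ↔
      HomJacobi (xiMap (1 + ρ)) := by
    simp only [HomJacobi, key]
  exact ⟨fun h => ⟨A1, hJ.1 h.2⟩, fun h => ⟨A2, hJ.2 h.2⟩⟩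
end

section
/- Let X be a finite chain (a finite linearly ordered set) with |X| ≥ 2 and let φ be a Lie algebra automorphism of I(X,K). Then φ is a regular Hom-Lie structure on I(X,K) if and only if there exist a unit β of I(X,K) and a K-linear map ν : I(X,K) → I(X,K) all of whose values are scalar multiples of δ and which vanishes on J(I(X,K)), such that φ = ξ_β + ν. Moreover ν is unique, and if |X| > 2 then β can be chosen uniquely subject to β(x,x) = 1 for all x and β − δ ∈ Z(J(I(X,K))). -/
open IncidenceAlgebra

attribute [local instance 100] LieRing.ofAssociativeRing

namespace Stmt11

section
set_option linter.unusedSectionVars false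
set_option linter.unusedSimpArgs false
variable {K : Type*} [Field K] {X : Type*} [LinearOrder X] [Fintype X] [LocallyFiniteOrder X]

theorem mul_app (f g : IncidenceAlgebra K X) (u v : X) :
    (f * g) u v = ∑ z : X, f u z * g z v := by
  rw [IncidenceAlgebra.mul_apply]
  apply Finset.sum_subset (Finset.subset_univ _)
  intro z _ hz
  rw [Finset.mem_Icc, not_and_or] at hz
  rcases hz with hz | hz
  · rw [apply_eq_zero_of_not_le hz f, zero_mul]
  · rw [apply_eq_zero_of_not_le hz g, mul_zero]

theorem mul_diag (f g : IncidenceAlgebra K X) (u : X) : (f * g) u u = f u u * g u u := by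
  rw [IncidenceAlgebra.mul_apply]; simp

theorem lt_zero (f : IncidenceAlgebra K X) {u v : X} (h : v < u) : f u v = 0 :=
  apply_eq_zero_of_not_le (not_le.2 h) f

variable (K) in
/-- matrix units -/
def E (x y : X) : IncidenceAlgebra K X where
  toFun u v := if u = x ∧ v = y ∧ x ≤ y then 1 else 0
  eq_zero_of_not_le' u v huv := by
    rw [if_neg]
    rintro ⟨rfl, rfl, h⟩
    exact huv h

theorem E_app (x y u v : X) : E K x y u v = if u = x ∧ v = y ∧ x ≤ y then 1 else 0 := rfl

theorem E_mul (x y : X) (h : x ≤ y) (f : IncidenceAlgebra K X) (u v : X) :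
    (E K x y * f) u v = if u = x then f y v else 0 := by
  rw [mul_app, Finset.sum_eq_single y]
  · simp [E_app, h]
  · intro z _ hz; simp [E_app, hz]
  · simp

theorem mul_E (x y : X) (h : x ≤ y) (f : IncidenceAlgebra K X) (u v : X) :
    (f * E K x y) u v = if v = y then f u x else 0 := by
  rw [mul_app, Finset.sum_eq_single x]
  · simp [E_app, h]
  · intro z _ hz; simp [E_app, hz]
  · simp

theorem E_mul_E {x y z w : X} (h : x ≤ y) (h' : z ≤ w) :
    E K x y * E K z w = if y = z then E K x w else 0 := by
  ext u v _
  rw [E_mul x y h]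
  split_ifs with h1 h2 h2
  · subst h2; simp [E_app, h1, h', h.trans h']
  · simp [E_app, h2]
  · simp [E_app, h1]
  · simp

theorem comm_E {x y : X} (h : x < y) {f : IncidenceAlgebra K X}
    (hc : E K x y * f = f * E K x y) :
    (∀ v, v ≠ y → f y v = 0) ∧ (∀ u, u ≠ x → f u x = 0) ∧ f x x = f y y := by
  have key : ∀ u v, (if u = x then f y v else 0) = (if v = y then f u x else 0) := by
    intro u v
    rw [← E_mul x y h.le, ← mul_E x y h.le, hc]
  refine ⟨fun v hv => ?_, fun u hu => ?_, ?_⟩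
  · simpa [hv] using key x v
  · simpa [hu] using (key u y).symm
  · simpa using (key x y).symm

theorem span_E (f : IncidenceAlgebra K X) : f = ∑ x : X, ∑ y : X, f x y • E K x y := by
  have sapp : ∀ (s : Finset X) (g : X → IncidenceAlgebra K X) (u v : X),
      (∑ x ∈ s, g x) u v = ∑ x ∈ s, g x u v := by
    intro s g u v
    induction s using Finset.induction_on with
    | empty => simp
    | insert a s ha ih => rw [Finset.sum_insert ha, Finset.sum_insert ha, ← ih]; rfl
  ext u v huv
  rw [sapp, Finset.sum_eq_single u, sapp, Finset.sum_eq_single v]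
  · simp [E_app, huv]
  · intro z _ hz; simp [E_app, hz.symm]
  · simp
  · intro z _ hz; rw [sapp]; apply Finset.sum_eq_zero; intro w _; simp [E_app, hz.symm]
  · simp

theorem hom_ext {B : Type*} [AddCommGroup B] [Module K B] {p q : IncidenceAlgebra K X →ₗ[K] B}
    (h : ∀ x y, x ≤ y → p (E K x y) = q (E K x y)) : p = q := by
  ext f
  rw [span_E f]
  simp only [map_sum, map_smul]
  refine Finset.sum_congr rfl fun x _ => Finset.sum_congr rfl fun y _ => ?_
  by_cases hxy : x ≤ y
  · rw [h x y hxy]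
  · rw [apply_eq_zero_of_not_le hxy f]; simp

theorem lie_E_self {i j : X} (h : i < j) : ⁅E K i i, E K i j⁆ = E K i j := by
  rw [Ring.lie_def, E_mul_E le_rfl h.le, E_mul_E h.le le_rfl]; simp [h.ne']

theorem core (φ : IncidenceAlgebra K X ≃ₗ⁅K⁆ IncidenceAlgebra K X) (hJ : HomJacobi ⇑φ)
    (m M : X) (hm : ∀ x, m ≤ x) (hM : ∀ x, x ≤ M) (hmM : m < M) :
    ∃ (s c : X → K) (t : X → X → K), t m M ≠ 0 ∧
      (∀ k, φ (E K k k) = s k • 1 + E K k k + c k • E K m M) ∧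
      (∀ k, k ≠ m → k ≠ M → c k = 0) ∧ c M = - c m ∧
      (∀ i j, i < j → φ (E K i j) = t i j • E K i j) ∧
      ((∃ z, m < z ∧ z < M) → ∀ i j, i < j → t i j = 1) := by
  have brk : ∀ {x y z w : X}, x ≤ y → z ≤ w →
      ⁅E K x y, E K z w⁆ = (if y = z then E K x w else 0) - (if w = x then E K z y else 0) := by
    intro x y z w h h'
    rw [Ring.lie_def, E_mul_E h h', E_mul_E h' h]
  -- F in J
  have FJ : ∀ i j, i < j → ∀ u, φ (E K i j) u u = 0 := by
    intro i j h u
    rw [← lie_E_self h, LieEquiv.map_lie, Ring.lie_def, IncidenceAlgebra.sub_apply, mul_diag, mul_diag]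
    ring
  have L1 : ∀ i j k, i < j → i ≠ k → j ≠ k →
      E K i j * φ (E K k k) = φ (E K k k) * E K i j := by
    intro i j k h hi hj
    have := hJ (E K i i) (E K i j) (E K k k)
    rw [lie_E_self h, brk h.le le_rfl, brk le_rfl le_rfl] at this
    simp [hi, hj, hi.symm, hj.symm] at this
    rwa [Ring.lie_def, sub_eq_zero] at this
  have L2 : ∀ k j, k < j → E K k j * (φ (E K k k) + φ (E K j j)) =
      (φ (E K k k) + φ (E K j j)) * E K k j := by
    intro k j h
    have := hJ (E K k k) (E K k j) (E K j j)
    rw [lie_E_self h, brk h.le le_rfl, brk le_rfl le_rfl] at this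
    simp [h.ne, h.ne'] at this
    rw [← lie_add, Ring.lie_def, sub_eq_zero] at this
    rw [add_comm (φ (E K k k)), this]
  -- corner
  have corner : ∃ t : K, t ≠ 0 ∧ φ (E K m M) = t • E K m M := by
    have hc : ∀ i j, i < j → E K i j * φ (E K m M) = φ (E K m M) * E K i j := by
      intro i j h
      have h0 : ⁅⁅φ.symm (E K i i), φ.symm (E K i j)⁆, E K m M⁆ = 0 := by
        have : ∀ a b : IncidenceAlgebra K X, ⁅⁅a, b⁆, E K m M⁆ = 0 := by
          intro a b
          have hd : ∀ u, (⁅a, b⁆ : IncidenceAlgebra K X) u u = 0 := by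
            intro u
            rw [Ring.lie_def, IncidenceAlgebra.sub_apply, mul_diag, mul_diag]; ring
          generalize ⁅a, b⁆ = g at hd
          rw [Ring.lie_def]
          ext u v _
          rw [IncidenceAlgebra.sub_apply, E_mul m M hmM.le, mul_E m M hmM.le]
          have h1 : g u m = 0 := by
            rcases (hm u).eq_or_lt with rfl | h
            · exact hd _
            · exact lt_zero g h
          have h2 : g M v = 0 := by
            rcases (hM v).eq_or_lt with rfl | h
            · exact hd _
            · exact lt_zero g h
          simp [h1, h2]
        exact this _ _
      have := congrArg φ h0
      simp only [LieEquiv.map_lie, LieEquiv.apply_symm_apply, map_zero] at this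
      rw [lie_E_self h, Ring.lie_def, sub_eq_zero] at this
      exact this
    have hval : φ (E K m M) = φ (E K m M) m M • E K m M := by
      ext u v huv
      simp only [IncidenceAlgebra.constSMul_apply, E_app, smul_eq_mul]
      rcases eq_or_lt_of_le huv with rfl | huv
      · rw [FJ _ _ hmM]
        rw [if_neg]; · simp
        rintro ⟨rfl, h, _⟩; exact hmM.ne h
      · by_cases hu : u = m
        · by_cases hv : v = M
          · subst hu hv; simp [hmM.le]
          · simp [hv]
            exact (comm_E (lt_of_le_of_ne (hM v) hv) (hc v M (lt_of_le_of_ne (hM v) hv))).2.1 u huv.ne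
        · simp [hu]
          exact (comm_E (lt_of_le_of_ne (hm u) (Ne.symm hu)) (hc m u (lt_of_le_of_ne (hm u) (Ne.symm hu)))).1 v huv.ne'
    refine ⟨_, ?_, hval⟩
    intro h0
    rw [h0, zero_smul] at hval
    have : E K m M = 0 := by simpa using hval
    have := congrArg (fun f : IncidenceAlgebra K X => f m M) this
    simp [E_app, hmM.le] at this
  obtain ⟨t0, ht0, hcor⟩ := corner
  have dia1 : ∀ i j k, i ≠ k → j ≠ k → φ (E K k k) i i = φ (E K k k) j j := by
    intro i j k hi hj
    rcases lt_trichotomy i j with h | rfl | h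
    · exact (comm_E h (L1 i j k h hi hj)).2.2
    · rfl
    · exact (comm_E h (L1 j i k h hj hi)).2.2.symm
  have a1 : φ (E K m m) m m = φ (E K m m) M M + 1 := by
    have := congrArg φ (lie_E_self (K := K) hmM)
    rw [LieEquiv.map_lie, hcor, Ring.lie_def] at this
    have := congrArg (fun f : IncidenceAlgebra K X => f m M) this
    simp [mul_E m M hmM.le, E_mul m M hmM.le] at this
    simp [E_app, hmM.le] at this
    apply mul_left_cancel₀ ht0
    linear_combination this
  have dia2 : ∀ k z, z ≠ k → φ (E K k k) k k = φ (E K k k) z z + 1 := by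
    intro k z hz
    rcases (hm k).eq_or_lt with rfl | h
    · rw [a1, dia1 z M m hz hmM.ne']
    · have := (comm_E h (L2 m k h)).2.2
      simp only [IncidenceAlgebra.add_apply] at this
      rw [dia1 z m k hz h.ne, a1, dia1 M k m hmM.ne' h.ne'] at *
      linear_combination -this
  have comD : ∀ i j, i ≠ j → φ (E K i i) * φ (E K j j) = φ (E K j j) * φ (E K i i) := by
    intro i j h
    have : ⁅E K i i, E K j j⁆ = 0 := by rw [brk le_rfl le_rfl]; simp [h, h.symm]
    have := congrArg φ this
    rwa [LieEquiv.map_lie, map_zero, Ring.lie_def, sub_eq_zero] at this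
  have R : ∀ i p q, i < p → p < q → φ (E K p p) p q = 0 ∧ φ (E K i i) p q = 0 := by
    intro i p q hip hpq
    obtain ⟨r1, -, -⟩ := comm_E hip (L2 i p hip)
    set W := φ (E K i i) + φ (E K p p) with hW
    have hcomm : W * φ (E K p p) = φ (E K p p) * W := by
      rw [hW, add_mul, mul_add, comD i p hip.ne]
    have h1 := congrArg (fun f : IncidenceAlgebra K X => f p q) hcomm
    rw [mul_app, mul_app, Finset.sum_eq_single p, Finset.sum_eq_single q] at h1
    · have e1 : W p p = W q q + 1 := by
        rw [hW, IncidenceAlgebra.add_apply, IncidenceAlgebra.add_apply,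
          dia2 p q hpq.ne', dia1 p q i hip.ne' (hip.trans hpq).ne']
        ring
      have z1 : φ (E K p p) p q = 0 := by
        rw [e1] at h1; linear_combination h1
      refine ⟨z1, ?_⟩
      have := r1 q hpq.ne'
      rw [hW, IncidenceAlgebra.add_apply, z1, add_zero] at this
      exact this
    · intro z _ hz
      rcases lt_trichotomy z p with h | h | h
      · rw [lt_zero _ h, zero_mul]
      · rw [h, r1 q hpq.ne', mul_zero]
      · rw [hW, IncidenceAlgebra.add_apply,
          (comm_E h (L1 p z i h hip.ne' (hip.trans h).ne')).1 q hz.symm,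
          (comm_E (hip.trans h) (L1 i z p (hip.trans h) hip.ne h.ne')).1 q hz.symm]
        simp
    · simp
    · intro z _ hz; rw [r1 z hz, zero_mul]
    · simp
  have C : ∀ p q j, p < q → q < j → φ (E K q q) p q = 0 ∧ φ (E K j j) p q = 0 := by
    intro p q j hpq hqj
    obtain ⟨-, r1, -⟩ := comm_E hqj (L2 q j hqj)
    set W := φ (E K q q) + φ (E K j j) with hW
    have hcomm : W * φ (E K q q) = φ (E K q q) * W := by
      rw [hW, add_mul, mul_add, comD q j hqj.ne]
    have h1 := congrArg (fun f : IncidenceAlgebra K X => f p q) hcomm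
    rw [mul_app, mul_app, Finset.sum_eq_single p, Finset.sum_eq_single q] at h1
    · have e1 : W q q = W p p + 1 := by
        rw [hW, IncidenceAlgebra.add_apply, IncidenceAlgebra.add_apply,
          dia2 q p hpq.ne, dia1 p q j (hpq.trans hqj).ne hqj.ne]
        ring
      have z1 : φ (E K q q) p q = 0 := by
        rw [e1] at h1; linear_combination -h1
      refine ⟨z1, ?_⟩
      have := r1 p hpq.ne
      rw [hW, IncidenceAlgebra.add_apply, z1, zero_add] at this
      exact this
    · intro z _ hz; rw [r1 z hz, mul_zero]
    · simp
    · intro z _ hz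
      rcases lt_trichotomy z q with h | h | h
      · rw [hW, IncidenceAlgebra.add_apply,
          (comm_E h (L1 z q j h (h.trans hqj).ne hqj.ne)).2.1 p hz.symm,
          (comm_E (h.trans hqj) (L1 z j q (h.trans hqj) h.ne hqj.ne')).2.1 p hz.symm]
        simp
      · rw [h, r1 p hpq.ne, zero_mul]
      · rw [lt_zero _ h, mul_zero]
    · simp
  have offd : ∀ k p q, p < q → (p ≠ m ∨ q ≠ M) → φ (E K k k) p q = 0 := by
    intro k p q hpq hor
    rcases hor with hp | hq
    · have hmp := lt_of_le_of_ne (hm p) hp.symm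
      rcases lt_trichotomy k p with h | rfl | h
      · exact (R k p q h hpq).2
      · exact (R m k q hmp hpq).1
      · exact (comm_E hmp (L1 m p k hmp (hmp.trans h).ne h.ne)).1 q hpq.ne'
    · have hqM := lt_of_le_of_ne (hM q) hq
      rcases lt_trichotomy k q with h | rfl | h
      · exact (comm_E hqM (L1 q M k hqM h.ne' (h.trans hqM).ne')).2.1 p hpq.ne
      · exact (C p k M hpq hqM).1
      · exact (C p q k hpq h).2
  have hD : ∀ k, φ (E K k k) = (φ (E K k k) k k - 1) • (1 : IncidenceAlgebra K X) + E K k k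
      + (φ (E K k k) m M) • E K m M := by
    intro k
    ext p q hpq
    simp only [IncidenceAlgebra.add_apply, IncidenceAlgebra.constSMul_apply, E_app, smul_eq_mul,
      IncidenceAlgebra.one_apply]
    rcases hpq.eq_or_lt with rfl | hpq
    · have : ¬ (p = m ∧ p = M ∧ m ≤ M) := by rintro ⟨rfl, h, _⟩; exact hmM.ne h
      rw [if_neg this]
      by_cases hk : p = k
      · subst hk; simp
      · simp [hk, dia2 k p hk]
    · have : ¬ (p = k ∧ q = k ∧ k ≤ k) := by rintro ⟨rfl, h, _⟩; exact hpq.ne' h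
      rw [if_neg this]
      by_cases h : p = m ∧ q = M
      · obtain ⟨rfl, rfl⟩ := h; simp [hpq.ne, hpq.le]
      · rw [offd k p q hpq (not_and_or.1 h), if_neg hpq.ne, if_neg (by tauto)]; simp
  -- F
  have hEF : ∀ i j, i < j → E K m M * φ (E K i j) = 0 ∧ φ (E K i j) * E K m M = 0 := by
    intro i j h
    constructor
    · ext u v _
      rw [E_mul m M hmM.le]
      have h2 : φ (E K i j) M v = 0 := by
        rcases (hM v).eq_or_lt with rfl | h'
        · exact FJ _ _ h _
        · exact lt_zero _ h'
      simp [h2]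
    · ext u v _
      rw [mul_E m M hmM.le]
      have h2 : φ (E K i j) u m = 0 := by
        rcases (hm u).eq_or_lt with rfl | h'
        · exact FJ _ _ h _
        · exact lt_zero _ h'
      simp [h2]
  have DF : ∀ k i j, i < j → ⁅φ (E K k k), φ (E K i j)⁆ =
      E K k k * φ (E K i j) - φ (E K i j) * E K k k := by
    intro k i j h
    rw [hD k, Ring.lie_def]
    simp only [add_mul, mul_add, smul_mul_assoc, mul_smul_comm, (hEF i j h).1, (hEF i j h).2,
      one_mul, mul_one]
    simp
  have hF : ∀ i j, i < j → φ (E K i j) = φ (E K i j) i j • E K i j := by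
    intro i j h
    have h1 : E K i i * φ (E K i j) - φ (E K i j) * E K i i = φ (E K i j) := by
      rw [← DF i i j h, ← LieEquiv.map_lie, lie_E_self h]
    have h2 : E K j j * φ (E K i j) - φ (E K i j) * E K j j = - φ (E K i j) := by
      rw [← DF j i j h, ← LieEquiv.map_lie, brk le_rfl h.le]; simp [h.ne']
    ext p q hpq
    have g1 := congrArg (fun f : IncidenceAlgebra K X => f p q) h1
    have g2 := congrArg (fun f : IncidenceAlgebra K X => f p q) h2
    simp only [IncidenceAlgebra.sub_apply, IncidenceAlgebra.neg_apply, E_mul i i le_rfl,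
      E_mul j j le_rfl, mul_E i i le_rfl, mul_E j j le_rfl] at g1 g2
    simp only [IncidenceAlgebra.constSMul_apply, E_app, smul_eq_mul]
    by_cases hh : p = i ∧ q = j
    · obtain ⟨rfl, rfl⟩ := hh; simp [h.le]
    · rw [if_neg (by tauto), mul_zero]
      by_cases hp : p = i
      · have hq : q ≠ j := fun h' => hh ⟨hp, h'⟩
        have hp' : p ≠ j := by rw [hp]; exact h.ne
        rw [if_neg hp', if_neg hq] at g2
        linear_combination g2
      · by_cases hq : q = i
        · have hq' : q ≠ j := by rw [hq]; exact h.ne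
          have hp' : p ≠ j := by rintro rfl; exact absurd (hpq.trans hq.le) (not_le.2 h)
          rw [if_neg hp', if_neg hq'] at g2
          linear_combination g2
        · rw [if_neg hp, if_neg hq] at g1
          linear_combination -g1
  have tone : ∀ i j k, i < j → j < k → φ (E K i j) i j = 1 ∧ φ (E K j k) j k = 1 := by
    intro i j k hij hjk
    have hik := hij.trans hjk
    constructor
    · have := hJ (E K k k) (E K i j) (E K j k)
      rw [brk le_rfl hij.le, brk hij.le hjk.le, brk hjk.le le_rfl, hF i j hij] at this
      have := congrArg (fun f : IncidenceAlgebra K X => f i k) this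
      simp [hij.ne', hij.ne, hjk.ne, hjk.ne', hik.ne, hik.ne', brk hjk.le hij.le] at this
      rw [Ring.lie_def] at this
      simp [E_mul i k hik.le, mul_E i k hik.le, dia2 k i hik.ne] at this
      simp [E_app, hik.le] at this
      linear_combination -this
    · have := hJ (E K i i) (E K i j) (E K j k)
      rw [lie_E_self hij, brk hij.le hjk.le, brk hjk.le le_rfl, hF j k hjk] at this
      have := congrArg (fun f : IncidenceAlgebra K X => f i k) this
      simp [hij.ne', hij.ne, hjk.ne, hjk.ne', hik.ne, hik.ne', brk hij.le hjk.le] at this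
      rw [Ring.lie_def] at this
      simp [E_mul i k hik.le, mul_E i k hik.le, dia2 i k hik.ne'] at this
      simp [E_app, hik.le] at this
      linear_combination this
  have cmid : ∀ k, k ≠ m → φ (E K m m) m M * (if k = M then 1 else 0) + φ (E K k k) m M = 0 := by
    intro k hk
    have h := comD m k hk.symm
    have e1 := hD m
    have e2 := hD k
    generalize φ (E K m m) m M = c1 at *
    generalize φ (E K k k) m M = c2 at *
    rw [e1, e2] at h
    simp only [add_mul, mul_add, smul_mul_assoc, mul_smul_comm, one_mul, mul_one,
      E_mul_E le_rfl le_rfl, E_mul_E hmM.le le_rfl, E_mul_E le_rfl hmM.le, E_mul_E hmM.le hmM.le] at h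
    have h1 := congrArg (fun f : IncidenceAlgebra K X => f m M) h
    by_cases hkM : k = M
    · simp [hk, hk.symm, hkM, hmM.ne, hmM.ne'] at h1
      simp [E_app, hmM.le, hmM.ne, hmM.ne', hk, hk.symm] at h1
      rw [if_pos hkM]
      linear_combination h1
    · simp [hk, hk.symm, Ne.symm hkM, hmM.ne, hmM.ne'] at h1
      simp [E_app, hmM.le, hmM.ne, hmM.ne', hk, hk.symm] at h1
      rw [if_neg hkM]
      linear_combination h1
  refine ⟨fun k => φ (E K k k) k k - 1, fun k => φ (E K k k) m M, fun i j => φ (E K i j) i j,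
    ?_, hD, ?_, ?_, hF, ?_⟩
  · show φ (E K m M) m M ≠ 0
    rw [hcor]; simpa [E_app, hmM.le] using ht0
  · intro k h1 h2
    simpa [h2] using cmid k h1
  · have := cmid M hmM.ne'
    simp at this
    linear_combination this
  · rintro ⟨z, hz1, hz2⟩ i j hij
    show φ (E K i j) i j = 1
    by_cases hj : j = M
    · by_cases hi : i = m
      · subst hi hj
        have h1 : ⁅E K i z, E K z j⁆ = E K i j := by
          rw [brk hz1.le hz2.le]; simp [hij.ne']
        have h2 := congrArg φ h1
        rw [LieEquiv.map_lie, hF i z hz1, hF z j hz2, (tone i z j hz1 hz2).1,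
          (tone i z j hz1 hz2).2, one_smul, one_smul, h1] at h2
        rw [← h2]; simp [E_app, hij.le]
      · exact (tone m i j (lt_of_le_of_ne (hm i) (Ne.symm hi)) hij).2
    · exact (tone i j M hij (lt_of_le_of_ne (hM j) hj)).1

theorem xi_diag {β : IncidenceAlgebra K X} (hβ : IsUnit β) (f : IncidenceAlgebra K X) (x : X) :
    xiMap β f x x = f x x := by
  have h := congrArg (fun f : IncidenceAlgebra K X => f x x) (Ring.mul_inverse_cancel β hβ)
  simp only [mul_diag] at h
  rw [IncidenceAlgebra.one_apply, if_pos rfl] at h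
  unfold xiMap
  rw [mul_diag, mul_diag]
  linear_combination f x x * h

theorem xi_eq {β f g : IncidenceAlgebra K X} (hβ : IsUnit β) (h : g * β = β * f) :
    xiMap β f = g := by
  unfold xiMap
  rw [← h, mul_assoc, Ring.mul_inverse_cancel β hβ, mul_one]

variable (K) in
/-- the normal form of the conjugating element -/
def bet (m M : X) (t u : K) : IncidenceAlgebra K X := 1 + (t - 1) • E K m m + u • E K m M

theorem bet_mul {m M : X} (h : m < M) (t u t' u' : K) :
    bet K m M t u * bet K m M t' u' = bet K m M (t * t') (t * u' + u) := by
  unfold bet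
  simp only [add_mul, mul_add, smul_mul_assoc, mul_smul_comm, one_mul, mul_one,
      E_mul_E le_rfl le_rfl, E_mul_E h.le le_rfl, E_mul_E le_rfl h.le, E_mul_E h.le h.le,
      if_true, if_neg h.ne', smul_zero]
  module

theorem bet_one {m M : X} : bet K m M 1 0 = 1 := by simp [bet]

theorem bet_unit {m M : X} (h : m < M) (t u : K) (ht : t ≠ 0) : IsUnit (bet K m M t u) := by
  refine ⟨⟨bet K m M t u, bet K m M t⁻¹ (-(t⁻¹ * u)), ?_, ?_⟩, rfl⟩
  · rw [bet_mul h, mul_inv_cancel₀ ht, ← bet_one (m := m) (M := M)]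
    congr 1; field_simp; ring
  · rw [bet_mul h, inv_mul_cancel₀ ht, ← bet_one (m := m) (M := M)]
    congr 1; ring

theorem eE {m M : X} (hm : ∀ x, m ≤ x) (hM : ∀ x, x ≤ M) (f : IncidenceAlgebra K X) :
    E K m M * f = f M M • E K m M := by
  ext u v _
  rw [E_mul m M (hm M), IncidenceAlgebra.constSMul_apply, E_app]
  by_cases hv : v = M
  · simp [hv, hm M]
  · rw [lt_zero f (lt_of_le_of_ne (hM v) hv)]; simp [hv]

theorem Ee {m M : X} (hm : ∀ x, m ≤ x) (f : IncidenceAlgebra K X) :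
    f * E K m M = f m m • E K m M := by
  ext u v _
  rw [mul_E m M (hm M), IncidenceAlgebra.constSMul_apply, E_app]
  by_cases hv : u = m
  · simp [hv, hm M]
  · rw [lt_zero f (lt_of_le_of_ne (hm u) (Ne.symm hv))]; simp [hv]

theorem xi_bet {m M : X} (hm : ∀ x, m ≤ x) (hM : ∀ x, x ≤ M) (hmM : m < M) (u : K)
    (f : IncidenceAlgebra K X) :
    xiMap (bet K m M 1 u) f = f + (u * (f M M - f m m)) • E K m M := by
  apply xi_eq (bet_unit hmM 1 u one_ne_zero)
  have hee : E K m M * E K m M = 0 := by rw [E_mul_E hmM.le hmM.le, if_neg hmM.ne']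
  unfold bet
  simp only [sub_self, zero_smul, add_zero, add_mul, mul_add, smul_mul_assoc, mul_smul_comm,
    one_mul, mul_one, hee, eE hm hM, Ee hm f]
  simp only [smul_zero]
  module

theorem rev {m M : X} (hm : ∀ x, m ≤ x) (hM : ∀ x, x ≤ M)
    (φ : IncidenceAlgebra K X → IncidenceAlgebra K X)
    (h : ∀ f, ∃ c d : K, φ f = f + d • E K m M + c • 1) : HomJacobi φ := by
  have key : ∀ a b c : IncidenceAlgebra K X, ⁅⁅a, b⁆, φ c⁆ = ⁅⁅a, b⁆, c⁆ := by
    intro a b c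
    obtain ⟨s, d, hc⟩ := h c
    have hd : ∀ u, (⁅a, b⁆ : IncidenceAlgebra K X) u u = 0 := by
      intro u
      rw [Ring.lie_def, IncidenceAlgebra.sub_apply, mul_diag, mul_diag]; ring
    generalize ⁅a, b⁆ = g at hd
    rw [hc, Ring.lie_def, Ring.lie_def]
    simp only [add_mul, mul_add, smul_mul_assoc, mul_smul_comm, one_mul, mul_one,
      eE hm hM g, Ee hm g, hd, zero_smul, smul_zero]
    abel
  intro a b c
  rw [key, key, key]
  simp only [Ring.lie_def]
  noncomm_ring

theorem nf {m M : X} (hm : ∀ x, m ≤ x) (hM : ∀ x, x ≤ M) (hmM : m < M)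
    (β : IncidenceAlgebra K X) (h1 : ∀ x, β x x = 1)
    (h2 : ∀ x y : X, x < y → (¬IsMin x ∨ ¬IsMax y) → β x y = 0) :
    β = bet K m M 1 (β m M) := by
  ext x y hxy
  simp only [bet, sub_self, zero_smul, add_zero, IncidenceAlgebra.add_apply,
    IncidenceAlgebra.constSMul_apply, IncidenceAlgebra.one_apply, E_app, smul_eq_mul]
  rcases hxy.eq_or_lt with rfl | hxy
  · rw [h1, if_pos rfl, if_neg]; · simp
    rintro ⟨rfl, h, _⟩; exact hmM.ne h
  · rw [if_neg hxy.ne]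
    by_cases hh : x = m ∧ y = M
    · obtain ⟨rfl, rfl⟩ := hh; simp [hxy.le]
    · rw [if_neg (by tauto), h2 x y hxy]; · simp
      rcases not_and_or.1 hh with h | h
      · left; intro h'; exact h (le_antisymm (h' (hm x)) (hm x))
      · right; intro h'; exact h (le_antisymm (hM y) (h' (hM y)))

theorem bet_nf {m M : X} (hm : ∀ x, m ≤ x) (hM : ∀ x, x ≤ M) (hmM : m < M) (u : K) :
    (∀ x, bet K m M 1 u x x = 1) ∧
    (∀ x y : X, x < y → (¬IsMin x ∨ ¬IsMax y) → bet K m M 1 u x y = 0) := by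
  constructor
  · intro x
    simp only [bet, sub_self, zero_smul, add_zero, IncidenceAlgebra.add_apply,
      IncidenceAlgebra.constSMul_apply, IncidenceAlgebra.one_apply, E_app, smul_eq_mul]
    rw [if_pos trivial, if_neg]; · simp
    rintro ⟨rfl, h, _⟩; exact hmM.ne h
  · intro x y hxy hor
    simp only [bet, sub_self, zero_smul, add_zero, IncidenceAlgebra.add_apply,
      IncidenceAlgebra.constSMul_apply, IncidenceAlgebra.one_apply, E_app, smul_eq_mul]
    rw [if_neg hxy.ne, if_neg]; · simp
    rintro ⟨rfl, rfl, _⟩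
    rcases hor with h | h
    · exact h fun z _ => hm z
    · exact h fun z _ => hM z

theorem fwd (φ : IncidenceAlgebra K X ≃ₗ⁅K⁆ IncidenceAlgebra K X) (hJ : HomJacobi ⇑φ)
    (m M : X) (hm : ∀ x, m ≤ x) (hM : ∀ x, x ≤ M) (hmM : m < M) :
    ∃ (t u : K) (s : X → K), t ≠ 0 ∧ ((∃ z, m < z ∧ z < M) → t = 1) ∧
      ∀ f, φ f = xiMap (bet K m M t u) f + (∑ k, s k * f k k) • 1 := by
  obtain ⟨s, c, t, ht, hD, hc, hcM, hF, hone⟩ := core φ hJ m M hm hM hmM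
  refine ⟨t m M, - c m, s, ht, fun h => hone h m M hmM, ?_⟩
  let ν : IncidenceAlgebra K X →ₗ[K] IncidenceAlgebra K X :=
    { toFun := fun f => (∑ k, s k * f k k) • 1
      map_add' := by
        intro f g
        simp only [IncidenceAlgebra.add_apply, mul_add, Finset.sum_add_distrib, add_smul]
      map_smul' := by
        intro a f
        simp only [IncidenceAlgebra.constSMul_apply, smul_eq_mul, RingHom.id_apply, smul_smul,
          Finset.mul_sum]
        congr 1
        exact Finset.sum_congr rfl fun k _ => by ring }
  have hν : ∀ f, ν f = (∑ k, s k * f k k) • 1 := fun f => rfl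
  set β := bet K m M (t m M) (- c m) with hβ
  have hu : IsUnit β := bet_unit hmM _ _ ht
  have key : (LinearMap.mulRight K β).comp ((φ : IncidenceAlgebra K X →ₗ[K] IncidenceAlgebra K X) - ν)
      = LinearMap.mulLeft K β := by
    apply hom_ext
    intro x y hxy
    simp only [LinearMap.comp_apply, LinearMap.sub_apply, LinearMap.mulRight_apply,
      LinearMap.mulLeft_apply, hν]
    change (φ (E K x y) - _) * β = _
    rcases hxy.eq_or_lt with rfl | hxy
    · have h0 : ∑ k, s k * E K x x k k = s x := by
        rw [Finset.sum_eq_single x]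
        · simp [E_app]
        · intro z _ hz; simp [E_app, hz]
        · simp
      rw [h0, hD x]
      have : s x • (1 : IncidenceAlgebra K X) + E K x x + c x • E K m M - s x • 1 =
        E K x x + c x • E K m M := by abel
      rw [this, hβ]
      unfold bet
      simp only [add_mul, mul_add, smul_mul_assoc, mul_smul_comm, one_mul, mul_one,
        E_mul_E le_rfl le_rfl, E_mul_E hmM.le le_rfl, E_mul_E le_rfl hmM.le,
        E_mul_E hmM.le hmM.le, if_neg hmM.ne', smul_zero]
      by_cases h1 : x = m
      · subst h1
        simp only [if_true, if_neg hmM.ne', smul_zero]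
        module
      · by_cases h2 : x = M
        · subst h2
          simp only [if_true, if_neg hmM.ne', if_neg hmM.ne, smul_zero, hcM]
          module
        · simp only [if_neg h1, if_neg h2, if_neg (Ne.symm h1), if_neg (Ne.symm h2), smul_zero,
            hc x h1 h2]
          module
    · have h0 : ∑ k, s k * E K x y k k = 0 := by
        apply Finset.sum_eq_zero
        intro z _
        rw [E_app, if_neg, mul_zero]
        rintro ⟨rfl, h, _⟩; exact hxy.ne h
      have hym : y ≠ m := ((hm x).trans_lt hxy).ne'
      have hMx : M ≠ x := (hxy.trans_le (hM y)).ne'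
      rw [h0, hF x y hxy, hβ]
      unfold bet
      simp only [add_mul, mul_add, smul_mul_assoc, mul_smul_comm, one_mul, mul_one,
        E_mul_E le_rfl hxy.le, E_mul_E hmM.le hxy.le, E_mul_E hxy.le le_rfl,
        E_mul_E hxy.le hmM.le, if_neg hym, if_neg hMx, smul_zero, zero_smul, sub_zero, add_zero]
      by_cases hz : ∃ z, m < z ∧ z < M
      · rw [hone hz x y hxy, hone hz m M hmM]; simp
      · have hx : x = m := by
          by_contra h
          exact hz ⟨x, lt_of_le_of_ne (hm x) (Ne.symm h), hxy.trans_le (hM y)⟩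
        have hy : y = M := by
          by_contra h
          exact hz ⟨y, (hm x).trans_lt hxy, lt_of_le_of_ne (hM y) h⟩
        subst hx hy
        simp only [if_true]
        module
  intro f
  have h := congrArg (fun p => p f) key
  simp only [LinearMap.comp_apply, LinearMap.sub_apply, LinearMap.mulRight_apply,
      LinearMap.mulLeft_apply, hν] at h
  rw [xi_eq hu h]
  change φ f = φ f - _ + _
  abel

end
end Stmt11

theorem stmt11 {K : Type*} [Field K] {X : Type*} [LinearOrder X] [Fintype X]
    [LocallyFiniteOrder X] (hcard : 2 ≤ Fintype.card X)
    (φ : IncidenceAlgebra K X ≃ₗ⁅K⁆ IncidenceAlgebra K X) :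
    HomJacobi ⇑φ ↔
      ∃ (β : IncidenceAlgebra K X)
        (ν : IncidenceAlgebra K X →ₗ[K] IncidenceAlgebra K X),
        IsUnit β ∧
        (∀ f, ∃ c : K, ν f = c • (1 : IncidenceAlgebra K X)) ∧
        (∀ f : IncidenceAlgebra K X, (∀ x, f x x = 0) → ν f = 0) ∧
        (∀ f, φ f = xiMap β f + ν f) ∧
        (∀ (β' : IncidenceAlgebra K X)
           (ν' : IncidenceAlgebra K X →ₗ[K] IncidenceAlgebra K X),
          IsUnit β' →
          (∀ f, ∃ c : K, ν' f = c • (1 : IncidenceAlgebra K X)) →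
          (∀ f : IncidenceAlgebra K X, (∀ x, f x x = 0) → ν' f = 0) →
          (∀ f, φ f = xiMap β' f + ν' f) → ν' = ν) ∧
        (2 < Fintype.card X →
          ∃! β' : IncidenceAlgebra K X,
            IsUnit β' ∧ (∀ x : X, β' x x = 1) ∧
            (∀ x y : X, x < y → (¬IsMin x ∨ ¬IsMax y) → β' x y = 0) ∧
            ∀ f, φ f = xiMap β' f + ν f) := by
  classical
  have hne : Nonempty X := Fintype.card_pos_iff.1 (by omega)
  obtain ⟨m, hm⟩ := Finite.exists_min (id : X → X)
  obtain ⟨M, hM⟩ := Finite.exists_max (id : X → X)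
  simp only [id] at hm hM
  have hmM : m < M := by
    refine lt_of_le_of_ne (hm M) ?_
    intro h
    have : Fintype.card X ≤ 1 := Fintype.card_le_one_iff.2 fun a b =>
      le_antisymm ((hM a).trans (h ▸ hm b)) ((hM b).trans (h ▸ hm a))
    omega
  have hcov : ¬ (2 < Fintype.card X) → ∀ x, x = m ∨ x = M := by
    intro h2 x
    by_contra hx
    push Not at hx
    have : ({x, m, M} : Finset X).card ≤ Fintype.card X := Finset.card_le_univ _
    rw [Finset.card_eq_three.2 ⟨x, m, M, hx.1, hx.2, hmM.ne, rfl⟩] at this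
    omega
  have hmid : 2 < Fintype.card X → ∃ z, m < z ∧ z < M := by
    intro h2
    by_contra hz
    have : (Finset.univ : Finset X) ⊆ {m, M} := by
      intro x _
      rw [Finset.mem_insert, Finset.mem_singleton]
      by_contra hx
      push Not at hx
      exact hz ⟨x, lt_of_le_of_ne (hm x) (Ne.symm hx.1), lt_of_le_of_ne (hM x) hx.2⟩
    have := (Finset.card_le_card this).trans Finset.card_le_two
    rw [Finset.card_univ] at this
    omega
  constructor
  · intro hJ
    obtain ⟨t, u, s, ht, h1, hφ⟩ := Stmt11.fwd φ hJ m M hm hM hmM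
    let ν : IncidenceAlgebra K X →ₗ[K] IncidenceAlgebra K X :=
      { toFun := fun f => (∑ k, s k * f k k) • 1
        map_add' := by
          intro f g
          simp only [IncidenceAlgebra.add_apply, mul_add, Finset.sum_add_distrib, add_smul]
        map_smul' := by
          intro a f
          simp only [IncidenceAlgebra.constSMul_apply, smul_eq_mul, RingHom.id_apply, smul_smul,
            Finset.mul_sum]
          congr 1
          exact Finset.sum_congr rfl fun k _ => by ring }
    have hu := Stmt11.bet_unit hmM t u ht
    refine ⟨Stmt11.bet K m M t u, ν, hu, fun f => ⟨_, rfl⟩, ?_, hφ, ?_, ?_⟩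
    · intro f hf
      change (∑ k, s k * f k k) • (1 : IncidenceAlgebra K X) = 0
      simp [hf]
    · intro β' ν' hβ' hc _ hφ'
      ext1 f
      obtain ⟨c, hc⟩ := hc f
      have e1 := congrArg (fun f : IncidenceAlgebra K X => f m m) ((hφ' f).symm.trans (hφ f))
      simp only [IncidenceAlgebra.add_apply, Stmt11.xi_diag hβ', Stmt11.xi_diag hu, hc,
        IncidenceAlgebra.constSMul_apply, IncidenceAlgebra.one_apply, if_true, smul_eq_mul,
        mul_one] at e1
      rw [hc, add_left_cancel e1]
      rfl
    · intro h2
      obtain rfl := h1 (hmid h2)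
      refine ⟨Stmt11.bet K m M 1 u, ⟨hu, (Stmt11.bet_nf hm hM hmM u).1,
        (Stmt11.bet_nf hm hM hmM u).2, hφ⟩, ?_⟩
      rintro β' ⟨_, hd, hz, hφ'⟩
      have hb := Stmt11.nf hm hM hmM β' hd hz
      have e1 := add_right_cancel ((hφ' (Stmt11.E K m m)).symm.trans (hφ (Stmt11.E K m m)))
      rw [hb, Stmt11.xi_bet hm hM hmM, Stmt11.xi_bet hm hM hmM] at e1
      have e2 := congrArg (fun f : IncidenceAlgebra K X => f m M) (add_left_cancel e1)
      simp [Stmt11.E_app, hmM.le, hmM.ne'] at e2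
      rw [hb, e2]
  · rintro ⟨β, ν, hβ, hν, _, hφ, _, hB⟩
    apply Stmt11.rev hm hM
    intro f
    obtain ⟨c, hc⟩ := hν f
    by_cases h2 : 2 < Fintype.card X
    · obtain ⟨β', ⟨_, hd, hz, hφ'⟩, _⟩ := hB h2
      rw [hφ' f, Stmt11.nf hm hM hmM β' hd hz, Stmt11.xi_bet hm hM hmM, hc]
      exact ⟨_, _, rfl⟩
    · refine ⟨c, xiMap β f m M - f m M, ?_⟩
      rw [hφ f, hc]
      congr 1
      ext x y hxy
      simp only [IncidenceAlgebra.add_apply, IncidenceAlgebra.constSMul_apply, Stmt11.E_app,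
        smul_eq_mul]
      rcases hcov h2 x with rfl | rfl <;> rcases hcov h2 y with rfl | rfl
      · simp [Stmt11.xi_diag hβ, hmM.ne]
      · simp [hmM.le]
      · exact absurd hxy (not_le.2 hmM)
      · simp [Stmt11.xi_diag hβ, hmM.ne']
end

section
/- The regular Hom-Lie structures on I(X,K) form a normal subgroup of the group of Lie algebra automorphisms of I(X,K): (i) the identity is a regular Hom-Lie structure; (ii) if φ and ψ are Lie automorphisms of I(X,K) that are regular Hom-Lie structures, then so is φ∘ψ; (iii) if φ is a Lie automorphism that is a regular Hom-Lie structure, then so is φ⁻¹; and (iv) if φ is a Lie automorphism that is a regular Hom-Lie structure and ψ is any Lie automorphism of I(X,K), then ψ∘φ∘ψ⁻¹ is a regular Hom-Lie structure. -/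
open IncidenceAlgebra

attribute [local instance 100] LieRing.ofAssociativeRing

section aux

variable {K : Type*} [Field K] {X : Type*} [PartialOrder X] [Fintype X] [DecidableEq X]
    [LocallyFiniteOrder X]

theorem aux_mul (f g : IncidenceAlgebra K X) (x y : X) :
    (f * g) x y = ∑ z, f x z * g z y := by
  rw [IncidenceAlgebra.mul_apply]
  apply Finset.sum_subset (Finset.subset_univ _)
  intro z _ hz
  rw [Finset.mem_Icc, not_and_or] at hz
  rcases hz with h | h
  · rw [apply_eq_zero_of_not_le h, zero_mul]
  · rw [apply_eq_zero_of_not_le h, mul_zero]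

theorem aux_lie (f g : IncidenceAlgebra K X) (x y : X) :
    ⁅f, g⁆ x y = ∑ z, f x z * g z y - ∑ z, g x z * f z y := by
  rw [Ring.lie_def, IncidenceAlgebra.sub_apply, aux_mul, aux_mul]

theorem aux_smul (c : K) (f : IncidenceAlgebra K X) (x y : X) :
    (c • f) x y = c * f x y := rfl

theorem aux_E (x y : X) (h : x ≤ y) (p q : X) :
    eSingle K x y h p q = if p = x ∧ q = y then 1 else 0 := rfl

theorem aux_lieE (x y : X) (h : x ≤ y) (g : IncidenceAlgebra K X) (p q : X) :
    ⁅eSingle K x y h, g⁆ p q = (if p = x then g y q else 0) - (if q = y then g p x else 0) := by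
  rw [aux_lie]
  congr 1
  · simp only [aux_E, ite_mul, one_mul, zero_mul, ite_and]
    by_cases hp : p = x <;> simp [hp]
  · simp only [aux_E, mul_ite, mul_one, mul_zero, and_comm, ite_and]
    by_cases hp : q = y <;> simp [hp]

theorem aux_EE (x y z : X) (h : x < y) (h' : y < z) :
    ⁅eSingle K x y h.le, eSingle K y z h'.le⁆ = eSingle K x z (h.trans h').le := by
  ext p q
  rw [aux_lieE]
  simp only [aux_E]
  have := h.ne; have := h'.ne; have := (h.trans h').ne
  by_cases h1 : p = x <;> by_cases h2 : q = z <;> by_cases h3 : q = y <;> by_cases h4 : p = y <;>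
    simp_all

theorem aux_EDl (x y z : X) (h : x < y) :
    ⁅eSingle K z z le_rfl, eSingle K x y h.le⁆ =
      ((if z = x then 1 else 0) - (if z = y then 1 else 0) : K) • eSingle K x y h.le := by
  ext p q
  rw [aux_lieE]
  simp only [aux_E, aux_smul]
  have := h.ne
  by_cases h1 : p = z <;> by_cases h2 : q = z <;> by_cases h3 : z = x <;> by_cases h4 : z = y <;>
    by_cases h5 : p = x <;> simp_all

theorem aux_DD (z w : X) :
    ⁅eSingle K z z le_rfl, eSingle K w w le_rfl⁆ = 0 := by
  ext p q
  rw [aux_lieE]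
  simp only [aux_E, IncidenceAlgebra.zero_apply]
  by_cases h1 : p = z <;> by_cases h2 : q = z <;> by_cases h3 : z = w <;>
    simp_all

/-- centralizer-of-J property -/
def auxP (h : IncidenceAlgebra K X) : Prop :=
  (∀ x y, x < y → h x x = h y y) ∧ (∀ x y z, x < y → y < z → h y z = 0) ∧
    (∀ x y z, x < y → y < z → h x y = 0)

theorem auxP_comm (h g : IncidenceAlgebra K X) (hh : auxP h) (hg : ∀ x, g x x = 0) :
    ⁅g, h⁆ = 0 := by
  ext x y
  rw [aux_lie, IncidenceAlgebra.zero_apply]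
  have h1 : ∑ z, g x z * h z y = g x y * h y y := by
    apply Finset.sum_eq_single y
    · intro z _ hz
      by_cases hzy : z ≤ y
      · by_cases hxz : x ≤ z
        · rcases eq_or_lt_of_le hxz with rfl | hxz
          · rw [hg, zero_mul]
          · rw [hh.2.1 x z y hxz (lt_of_le_of_ne hzy hz), mul_zero]
        · rw [apply_eq_zero_of_not_le hxz, zero_mul]
      · rw [apply_eq_zero_of_not_le hzy, mul_zero]
    · simp
  have h2 : ∑ z, h x z * g z y = h x x * g x y := by
    apply Finset.sum_eq_single x
    · intro z _ hz
      by_cases hzy : x ≤ z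
      · by_cases hxz : z ≤ y
        · rcases eq_or_lt_of_le hxz with rfl | hxz
          · rw [hg, mul_zero]
          · rw [hh.2.2 x z y (lt_of_le_of_ne hzy (Ne.symm hz)) hxz, zero_mul]
        · rw [apply_eq_zero_of_not_le hxz, mul_zero]
      · rw [apply_eq_zero_of_not_le hzy, zero_mul]
    · simp
  rw [h1, h2]
  by_cases hxy : x ≤ y
  · rcases eq_or_lt_of_le hxy with rfl | hxy
    · rw [hg]; ring
    · rw [hh.1 x y hxy]; ring
  · rw [apply_eq_zero_of_not_le hxy]; ring

theorem aux_lie_diag (f g : IncidenceAlgebra K X) (x : X) : ⁅f, g⁆ x x = 0 := by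
  rw [aux_lie, sub_eq_zero]
  apply Finset.sum_congr rfl
  intro z _
  by_cases h1 : x ≤ z
  · by_cases h2 : z ≤ x
    · obtain rfl := le_antisymm h1 h2
      ring
    · simp [apply_eq_zero_of_not_le h2]
  · simp [apply_eq_zero_of_not_le h1]

/-- If the interior terms vanish, the bracket is given by endpoints. -/
theorem aux_lie_end (f g : IncidenceAlgebra K X) (x y : X) (hxy : x < y)
    (h1 : ∀ z, x < z → z < y → f x z * g z y = 0)
    (h2 : ∀ z, x < z → z < y → g x z * f z y = 0) :
    ⁅f, g⁆ x y = (f x x - f y y) * g x y - (g x x - g y y) * f x y := by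
  have key : ∀ f g : IncidenceAlgebra K X, (∀ z, x < z → z < y → f x z * g z y = 0) →
      ∑ z, f x z * g z y = f x x * g x y + f x y * g y y := by
    intro f g h
    rw [← Finset.sum_pair (f := fun z => f x z * g z y) hxy.ne]
    symm
    apply Finset.sum_subset (Finset.subset_univ _)
    intro z _ hz
    simp only [Finset.mem_insert, Finset.mem_singleton, not_or] at hz
    by_cases ha : x ≤ z
    · by_cases hb : z ≤ y
      · exact h z (lt_of_le_of_ne ha (Ne.symm hz.1)) (lt_of_le_of_ne hb hz.2)
      · rw [apply_eq_zero_of_not_le hb, mul_zero]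
    · rw [apply_eq_zero_of_not_le ha, zero_mul]
  rw [aux_lie, key f g h1, key g f h2]
  ring

variable (φ : IncidenceAlgebra K X ≃ₗ⁅K⁆ IncidenceAlgebra K X)

theorem aux_phiJ (u v : X) (h : u < v) (x : X) : φ (eSingle K u v h.le) x x = 0 := by
  have := aux_EDl (K := K) u v u h
  rw [if_pos rfl, if_neg h.ne, sub_zero, one_smul] at this
  rw [← this, LieEquiv.map_lie, aux_lie_diag]

/-- D,D,J condition -/
theorem aux_ddj (hφ : HomJacobi ⇑φ) (z w x y : X) (h : x < y) (p q : X) :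
    ((if w = x then 1 else 0) - (if w = y then 1 else 0) : K) *
      ((if p = x then φ (eSingle K z z le_rfl) y q else 0) -
        (if q = y then φ (eSingle K z z le_rfl) p x else 0)) =
    ((if z = x then 1 else 0) - (if z = y then 1 else 0) : K) *
      ((if p = x then φ (eSingle K w w le_rfl) y q else 0) -
        (if q = y then φ (eSingle K w w le_rfl) p x else 0)) := by
  have := hφ (eSingle K z z le_rfl) (eSingle K w w le_rfl) (eSingle K x y h.le)
  rw [aux_DD, aux_EDl _ _ _ h, ← lie_skew (eSingle K x y h.le) (eSingle K z z le_rfl),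
    aux_EDl _ _ _ h, zero_lie, zero_add, neg_lie, smul_lie, smul_lie] at this
  have := congrArg (fun f : IncidenceAlgebra K X => f p q) this
  simp only [IncidenceAlgebra.add_apply, IncidenceAlgebra.neg_apply, aux_smul,
    IncidenceAlgebra.zero_apply, aux_lieE] at this
  linear_combination this

theorem aux_C (hφ : HomJacobi ⇑φ) (u v z : X) (h : u < v) :
    φ (eSingle K z z le_rfl) u u - φ (eSingle K z z le_rfl) v v =
      ((if z = u then 1 else 0) - (if z = v then 1 else 0) : K) := by
  set F := φ (eSingle K u v h.le) with hF
  have hne : ∃ pq : X × X, F pq.1 pq.2 ≠ 0 := by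
    by_contra hcon
    push Not at hcon
    have h0 : F = 0 := by
      ext p q
      exact hcon (p, q)
    have h1 : eSingle K u v h.le = 0 := by
      apply φ.injective
      change φ _ = φ 0
      rw [← hF, h0, map_zero]
    have := congrArg (fun f : IncidenceAlgebra K X => f u v) h1
    simp [aux_E] at this
  obtain ⟨⟨p, q⟩, hpq, hmin⟩ := Set.exists_min_image {pq : X × X | F pq.1 pq.2 ≠ 0}
    (fun pq => (Finset.Icc pq.1 pq.2).card) (Set.toFinite _) hne
  simp only [Set.mem_ofPred_eq] at hpq hmin
  have hle : p ≤ q := by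
    by_contra hcon
    exact hpq (apply_eq_zero_of_not_le hcon _)
  have hlt : p < q := by
    apply lt_of_le_of_ne hle
    rintro rfl
    exact hpq (aux_phiJ φ u v h p)
  have hz1 : ∀ z, p < z → z < q → F z q = 0 := by
    intro z h1 h2
    by_contra hcon
    have := hmin (z, q) hcon
    exact absurd (Finset.card_lt_card (Finset.Icc_ssubset_Icc_left hle h1 le_rfl)) (not_lt.mpr this)
  have hz2 : ∀ z, p < z → z < q → F p z = 0 := by
    intro z h1 h2
    by_contra hcon
    have := hmin (p, z) hcon
    exact absurd (Finset.card_lt_card (Finset.Icc_ssubset_Icc_right hle le_rfl h2)) (not_lt.mpr this)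
  have key : ∀ z, φ (eSingle K z z le_rfl) p p - φ (eSingle K z z le_rfl) q q =
      ((if z = u then 1 else 0) - (if z = v then 1 else 0) : K) := by
    intro z
    have e := congrArg (fun f : IncidenceAlgebra K X => φ f p q) (aux_EDl (K := K) u v z h)
    simp only [LieEquiv.map_lie, ← hF] at e
    have hpp : F p p = 0 := aux_phiJ φ u v h p
    have hqq : F q q = 0 := aux_phiJ φ u v h q
    rw [aux_lie_end _ _ p q hlt (by intro z h1 h2; rw [hz1 z h1 h2, mul_zero])
      (by intro z h1 h2; rw [hz2 z h1 h2, zero_mul]), hpp, hqq, map_smul, ← hF, aux_smul] at e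
    apply mul_right_cancel₀ hpq
    linear_combination e
  have kB := fun z => aux_ddj φ hφ z p p q hlt p q
  simp only [if_true, hlt.ne, if_false, sub_zero, one_mul] at kB
  have k2 : ∀ z, ((if z = u then 1 else 0) - (if z = v then 1 else 0) : K) =
      ((if z = p then 1 else 0) - (if z = q then 1 else 0) : K) *
      ((if p = u then 1 else 0) - (if p = v then 1 else 0) : K) := by
    intro z
    rw [← key z, ← key p]
    linear_combination - kB z
  have hpu : p = u := by
    by_contra hpu
    have k3 := k2 u
    by_cases hpv : p = v
    · subst hpv
      by_cases huq : u = q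
      · subst huq
        exact absurd (h.trans hlt) (lt_irrefl _)
      · simp [h.ne, huq] at k3
    · simp [h.ne, hpu, hpv] at k3
  subst hpu
  have hqv : q = v := by
    by_contra hqv
    have k3 := k2 v
    simp [h.ne, h.ne', Ne.symm hqv] at k3
  subst hqv
  exact key z

theorem aux_D1 (hφ : HomJacobi ⇑φ) (x y : X) (h : x < y) (t : X) (ht : y < t) :
    ∀ z, φ (eSingle K z z le_rfl) y t = 0 := by
  induction t using WellFoundedLT.induction with
  | ind t ih =>
  have hI : ∀ z w : X, 
      ((if z = y then 1 else 0) - (if z = t then 1 else 0) : K) * φ (eSingle K w w le_rfl) y t =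
      ((if w = y then 1 else 0) - (if w = t then 1 else 0) : K) * φ (eSingle K z z le_rfl) y t := by
    intro z w
    have e := congrArg (fun f : IncidenceAlgebra K X => φ f y t) (aux_DD (K := K) z w)
    simp only [LieEquiv.map_lie, map_zero, IncidenceAlgebra.zero_apply] at e
    rw [aux_lie_end _ _ y t ht (by intro s h1 h2; rw [ih s h2 h1, zero_mul])
      (by intro s h1 h2; rw [ih s h2 h1, zero_mul]), aux_C φ hφ _ _ _ ht, aux_C φ hφ _ _ _ ht] at e
    linear_combination e
  have hx : φ (eSingle K x x le_rfl) y t = 0 := by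
    have := hI t x
    simpa [ht.ne', h.ne, (h.trans ht).ne] using this
  intro z
  have := aux_ddj φ hφ z x x y h x t
  simpa [ht.ne', h.ne, hx] using this

theorem aux_D2 (hφ : HomJacobi ⇑φ) (x y : X) (h : x < y) (t : X) (ht : t < x) :
    ∀ z, φ (eSingle K z z le_rfl) t x = 0 := by
  induction t using WellFoundedGT.induction with
  | ind t ih =>
  have hI : ∀ z w : X, 
      ((if z = t then 1 else 0) - (if z = x then 1 else 0) : K) * φ (eSingle K w w le_rfl) t x =
      ((if w = t then 1 else 0) - (if w = x then 1 else 0) : K) * φ (eSingle K z z le_rfl) t x := by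
    intro z w
    have e := congrArg (fun f : IncidenceAlgebra K X => φ f t x) (aux_DD (K := K) z w)
    simp only [LieEquiv.map_lie, map_zero, IncidenceAlgebra.zero_apply] at e
    rw [aux_lie_end _ _ t x ht (by intro s h1 h2; rw [ih s h1 h2, mul_zero])
      (by intro s h1 h2; rw [ih s h1 h2, mul_zero]), aux_C φ hφ _ _ _ ht, aux_C φ hφ _ _ _ ht] at e
    linear_combination e
  have hx : φ (eSingle K y y le_rfl) t x = 0 := by
    have := hI t y
    simpa [ht.ne, h.ne', (ht.trans h).ne'] using this
  intro z
  have := aux_ddj φ hφ z y x y h t y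
  simpa [ht.ne, h.ne', hx] using this

theorem aux_PD (hφ : HomJacobi ⇑φ) (z : X) :
    auxP (φ (eSingle K z z le_rfl) - eSingle K z z le_rfl) := by
  refine ⟨?_, ?_, ?_⟩
  · intro x y h
    have := aux_C φ hφ x y z h
    simp only [IncidenceAlgebra.sub_apply, aux_E, and_self, @eq_comm _ x z, @eq_comm _ y z]
    linear_combination this
  · intro x y t h ht
    rw [IncidenceAlgebra.sub_apply, aux_D1 φ hφ x y h t ht, aux_E, if_neg, sub_zero]
    rintro ⟨rfl, rfl⟩
    exact lt_irrefl _ ht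
  · intro t x y ht h
    rw [IncidenceAlgebra.sub_apply, aux_D2 φ hφ x y h t ht, aux_E, if_neg, sub_zero]
    rintro ⟨rfl, rfl⟩
    exact lt_irrefl _ ht

theorem aux_F (hφ : HomJacobi ⇑φ) (u v : X) (h : u < v) (p q : X) (hpq : ¬ (p = u ∧ q = v)) :
    φ (eSingle K u v h.le) p q = 0 := by
  by_cases hle : p ≤ q
  swap
  · exact apply_eq_zero_of_not_le hle _
  rcases eq_or_lt_of_le hle with rfl | hlt
  · exact aux_phiJ φ u v h p
  by_contra hne
  have key : ∀ z, ((if z = u then 1 else 0) - (if z = v then 1 else 0) : K) =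
      ((if z = p then 1 else 0) - (if z = q then 1 else 0) : K) := by
    intro z
    have e := congrArg φ (aux_EDl (K := K) u v z h)
    have e2 := auxP_comm _ (φ (eSingle K u v h.le)) (aux_PD φ hφ z) (aux_phiJ φ u v h)
    rw [lie_sub, sub_eq_zero] at e2
    rw [LieEquiv.map_lie, ← lie_skew, e2, lie_skew, map_smul] at e
    have e3 := congrArg (fun f : IncidenceAlgebra K X => f p q) e
    simp only [aux_lieE, aux_smul] at e3
    apply mul_right_cancel₀ hne
    rw [← e3, sub_mul, ite_mul, ite_mul, one_mul, zero_mul]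
    congr 1
    · by_cases hz : p = z
      · subst hz; simp
      · simp [hz, Ne.symm hz]
    · by_cases hz : q = z
      · subst hz; simp
      · simp [hz, Ne.symm hz]
  by_cases hup : u = p
  · subst hup
    have := key v
    by_cases hvq : v = q
    · exact hpq ⟨rfl, hvq.symm⟩
    · simp [h.ne', hvq] at this
  · by_cases huq : u = q
    · subst huq
      have k := key p
      by_cases hpv : p = v
      · subst hpv; exact lt_irrefl _ (h.trans hlt)
      · simp [hpv, hlt.ne] at k
    · have := key u
      simp [h.ne, hup, huq] at this

theorem aux_G (hφ : HomJacobi ⇑φ) (x y z : X) (h : x < y) (h' : y < z) (a : X) :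
    ((if a = x then 1 else 0) - (if a = y then 1 else 0) : K) * φ (eSingle K y z h'.le) y z +
    ((if a = y then 1 else 0) - (if a = z then 1 else 0) : K) * φ (eSingle K x y h.le) x y =
    ((if a = x then 1 else 0) - (if a = z then 1 else 0) : K) := by
  have e := hφ (eSingle K a a le_rfl) (eSingle K x y h.le) (eSingle K y z h'.le)
  rw [aux_EE _ _ _ h h', aux_EDl _ _ _ h, ← lie_skew (eSingle K y z h'.le) (eSingle K a a le_rfl),
    aux_EDl _ _ _ h', neg_lie, smul_lie, smul_lie] at e
  have e := congrArg (fun f : IncidenceAlgebra K X => f x z) e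
  simp only [IncidenceAlgebra.add_apply, IncidenceAlgebra.neg_apply, aux_smul,
    IncidenceAlgebra.zero_apply, aux_lieE, if_true, h.ne, h'.ne', if_false] at e
  have := aux_C φ hφ x z a (h.trans h')
  linear_combination e + this

theorem aux_PE (hφ : HomJacobi ⇑φ) (u v : X) (h : u ≤ v) :
    auxP (φ (eSingle K u v h) - eSingle K u v h) := by
  rcases eq_or_lt_of_le h with rfl | h
  · exact aux_PD φ hφ u
  have h0 : ∀ p q, ¬ (p = u ∧ q = v) →
      (φ (eSingle K u v h.le) - eSingle K u v h.le) p q = 0 := by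
    intro p q hpq
    rw [IncidenceAlgebra.sub_apply, aux_F φ hφ u v h p q hpq, aux_E, if_neg hpq, sub_zero]
  refine ⟨?_, ?_, ?_⟩
  · intro x y _
    rw [h0, h0]
    · rintro ⟨rfl, rfl⟩; exact lt_irrefl _ h
    · rintro ⟨rfl, rfl⟩; exact lt_irrefl _ h
  · intro x y z h1 h2
    by_cases hyz : y = u ∧ z = v
    · obtain ⟨rfl, rfl⟩ := hyz
      have := aux_G φ hφ x y z h1 h2 x
      simp [h1.ne, (h1.trans h2).ne] at this
      simp [IncidenceAlgebra.sub_apply, aux_E, this]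
    · exact h0 _ _ hyz
  · intro x y z h1 h2
    by_cases hyz : x = u ∧ y = v
    · obtain ⟨rfl, rfl⟩ := hyz
      have := aux_G φ hφ x y z h1 h2 z
      simp [h2.ne', (h1.trans h2).ne'] at this
      simp [IncidenceAlgebra.sub_apply, aux_E, this]
    · exact h0 _ _ hyz

theorem aux_decomp (c : IncidenceAlgebra K X) :
    c ∈ Submodule.span K {f : IncidenceAlgebra K X | ∃ x y, ∃ h : x ≤ y, f = eSingle K x y h} := by
  classical
  have : c = ∑ pq : {pq : X × X // pq.1 ≤ pq.2}, c pq.1.1 pq.1.2 • eSingle K pq.1.1 pq.1.2 pq.2 := by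
    ext p q hpq
    let ev : IncidenceAlgebra K X →+ K :=
      { toFun := fun f => f p q, map_zero' := rfl, map_add' := fun _ _ => rfl }
    change c p q = ev _
    rw [map_sum, Finset.sum_eq_single ⟨(p, q), hpq⟩]
    · simp [ev, aux_E, aux_smul]
    · rintro ⟨⟨a, b⟩, hab⟩ _ hne
      have : ¬ (p = a ∧ q = b) := by
        rintro ⟨rfl, rfl⟩; exact hne rfl
      simp [ev, aux_E, aux_smul, this]
    · simp
  rw [this]
  exact Submodule.sum_mem _ fun pq _ => Submodule.smul_mem _ _
    (Submodule.subset_span ⟨_, _, pq.2, rfl⟩)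

theorem aux_main (hφ : HomJacobi ⇑φ) (a b c : IncidenceAlgebra K X) :
    ⁅⁅a, b⁆, φ c - c⁆ = 0 := by
  induction aux_decomp c using Submodule.span_induction with
  | mem f hf =>
    obtain ⟨x, y, h, rfl⟩ := hf
    exact auxP_comm _ _ (aux_PE φ hφ x y h) (aux_lie_diag a b)
  | zero => simp
  | add f g _ _ hf hg =>
    rw [map_add, add_sub_add_comm, lie_add, hf, hg, add_zero]
  | smul r f _ hf =>
    rw [map_smul, ← smul_sub, lie_smul, hf, smul_zero]

end aux

section aux2

variable {K A : Type*} [CommRing K] [LieRing A] [LieAlgebra K A]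

theorem aux_conv (φ : A → A) (h : ∀ a b c : A, ⁅⁅a, b⁆, φ c - c⁆ = 0) : HomJacobi φ := by
  intro a b c
  have e : ∀ a b c : A, ⁅⁅a, b⁆, φ c⁆ = ⁅⁅a, b⁆, c⁆ := fun a b c => by
    rw [← sub_eq_zero, ← lie_sub, h]
  rw [e, e, e]
  have := lie_jacobi c a b
  rw [← lie_skew c ⁅a, b⁆, ← lie_skew a ⁅b, c⁆, ← lie_skew b ⁅c, a⁆] at this
  rw [← neg_eq_zero, ← this]
  abel

theorem aux_pres (φ : A ≃ₗ⁅K⁆ A) (d : A) (h : ∀ a b : A, ⁅⁅a, b⁆, d⁆ = 0) (a b : A) :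
    ⁅⁅a, b⁆, φ d⁆ = 0 := by
  have := congrArg φ (h (φ.symm a) (φ.symm b))
  simpa [LieEquiv.map_lie] using this

end aux2

theorem stmt13 {K : Type*} [Field K] {X : Type*} [PartialOrder X] [Fintype X] [DecidableEq X]
    [LocallyFiniteOrder X]
    (hcard : 1 < Fintype.card X)
    (hconn : ∀ x y : X, Relation.ReflTransGen (fun a b : X => a ≤ b ∨ b ≤ a) x y) :
    IsRegHomLie K (id : IncidenceAlgebra K X → IncidenceAlgebra K X) ∧
    (∀ φ ψ : IncidenceAlgebra K X ≃ₗ⁅K⁆ IncidenceAlgebra K X,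
      HomJacobi ⇑φ → HomJacobi ⇑ψ → IsRegHomLie K (⇑φ ∘ ⇑ψ)) ∧
    (∀ φ : IncidenceAlgebra K X ≃ₗ⁅K⁆ IncidenceAlgebra K X,
      HomJacobi ⇑φ → IsRegHomLie K ⇑φ.symm) ∧
    (∀ φ ψ : IncidenceAlgebra K X ≃ₗ⁅K⁆ IncidenceAlgebra K X,
      HomJacobi ⇑φ → IsRegHomLie K (⇑ψ ∘ ⇑φ ∘ ⇑ψ.symm)) := by
  refine ⟨⟨⟨LieEquiv.refl, rfl⟩, aux_conv _ (by simp)⟩, ?_, ?_, ?_⟩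
  · intro φ ψ hφ hψ
    refine ⟨⟨ψ.trans φ, rfl⟩, aux_conv _ ?_⟩
    intro a b c
    have h1 := aux_pres φ (ψ c - c) (fun a b => aux_main ψ hψ a b c) a b
    have h2 := aux_main φ hφ a b c
    have : (⇑φ ∘ ⇑ψ) c - c = φ (ψ c - c) + (φ c - c) := by
      rw [map_sub, Function.comp_apply]; abel
    rw [this, lie_add, h1, h2, add_zero]
  · intro φ hφ
    refine ⟨⟨φ.symm, rfl⟩, aux_conv _ ?_⟩
    intro a b c
    have h1 := aux_main φ hφ a b (φ.symm c)
    rw [LieEquiv.apply_symm_apply] at h1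
    rw [← neg_sub, lie_neg, h1, neg_zero]
  · intro φ ψ hφ
    refine ⟨⟨(ψ.symm.trans φ).trans ψ, rfl⟩, ?_⟩
    intro a b c
    have := congrArg ψ (hφ (ψ.symm a) (ψ.symm b) (ψ.symm c))
    simpa [LieEquiv.map_lie] using this
end
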